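/- Let k1 ≥ k2 ≥ 2 be integers and let G be a connected simple graph on n ≥ 2k1 + 2k2 + 2 vertices that contains no subgraph isomorphic to P_{2k1+1} ∪ P_{2k2+1}. Then e(G) ≤ max{ h(n, 2k1 + 2k2 + 1, 1), h(n, 2k1 + 2k2, k1 + k2 − 1) }. -/

import Mathlib

open SimpleGraph

/-- The number of edges of a simple graph. -/
noncomputable def edgeCount {V : Type*} (G : SimpleGraph V) : ℕ := G.edgeSet.ncard

/-- `H` occurs as a subgraph of `G` (there is an injective map preserving adjacency). -/
def ContainsCopy {V W : Type*} (G : SimpleGraph V) (H : SimpleGraph W) : Prop :=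
  ∃ f : W → V, Function.Injective f ∧ ∀ a b : W, H.Adj a b → G.Adj (f a) (f b)

/-- The Turán number `ex(n, H)`: the maximum number of edges of an `H`-free
simple graph on `n` vertices. -/
noncomputable def exNum (n : ℕ) {W : Type*} (H : SimpleGraph W) : ℕ :=
  sSup {m | ∃ G : SimpleGraph (Fin n), ¬ ContainsCopy G H ∧ edgeCount G = m}

/-- `h(n,k,a) = C(k-a,2) + a(n-k+a)`. -/
def hFun (n k a : ℕ) : ℕ := (k - a).choose 2 + a * (n - k + a)

/-- `c(n,m,ℓ) = C(m-1,2) + t·C(ℓ-1,2) + C(r,2)` where `n = (m-1) + t(ℓ-1) + r`,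
`0 ≤ r < ℓ-1`. -/
def cFun (n m l : ℕ) : ℕ :=
  (m - 1).choose 2 + ((n - (m - 1)) / (l - 1)) * ((l - 1).choose 2)
    + ((n - (m - 1)) % (l - 1)).choose 2

/-!
Write `K = k₁ + k₂`. A path on `2K + 2` vertices contains `P_{2k₁+1} ∪ P_{2k₂+1}`, so by
connectedness every cycle on fewer than all vertices has at most `2K` of them. Edges are counted
through degree sums.

If every cycle is shorter than `2K`, let `S` be a smallest set of more than `K` vertices maximizing
`2 e(S) - 2 (K - 1) |S|`. Unless `|S| = K + 1`, every vertex of `S` has more than `K - 1` neighbours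
in `S`, and rotation of longest paths closes up a spanning cycle of `S`. Take a longest cycle
through `S`. The vertices off it are peeled off at bounded cost each, starting from a longest path
leading away from it: either the last vertex of the path has small degree, or the whole path spans a
clique with few attachments, which is removed at once.

If some cycle `C` has `2K` vertices, the vertices off `C` form an independent set. Choose `C` and a
vertex `z` off it with the maximal number of edges between them. The successors on `C` of the
neighbours of `z` are independent, and so are their predecessors. No neighbour of `z` can follow
at distance `2 (k₂ - 1)` on `C` a neighbour of another vertex off `C`, since the arc between them,
extended by both outer vertices, is a `P_{2k₂+1}` missing a `P_{2k₁+1}` of `C`. Hence `z` has fewer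
than `K` neighbours on `C`, and the degrees of the vertices of `C` that follow them are controlled
by exchanging such a vertex with `z`.
-/

section

open scoped Classical

section Paths

variable {V : Type*} {G : SimpleGraph V} {l l₁ l₂ : List V} {a b u v w : V}

/-- `l` lists, in order, the vertices of a path of `G` from `a` to `b`. -/
structure IsPathBetween (G : SimpleGraph V) (l : List V) (a b : V) : Prop where
  isChain : l.IsChain G.Adj
  nodup : l.Nodup
  head : l.head? = some a
  getLast : l.getLast? = some b

/-- The vertex set `T` carries a spanning cycle of `G`. The two ends of an edge count as a cycle
of length two. -/
def HasCycleOn (G : SimpleGraph V) (T : Finset V) : Prop :=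
  ∃ l a b, IsPathBetween G l a b ∧ G.Adj b a ∧ l.toFinset = T

namespace IsPathBetween

theorem singleton (v : V) : IsPathBetween G [v] v v :=
  ⟨.singleton _, List.nodup_singleton _, rfl, rfl⟩

theorem ne_nil (h : IsPathBetween G l a b) : l ≠ [] := by
  rintro rfl
  simpa using h.head

theorem length_pos (h : IsPathBetween G l a b) : 0 < l.length :=
  List.length_pos_of_ne_nil h.ne_nil

theorem head_mem (h : IsPathBetween G l a b) : a ∈ l := List.mem_of_mem_head? h.head

theorem getLast_mem (h : IsPathBetween G l a b) : b ∈ l := List.mem_of_getLast? h.getLast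

theorem card_toFinset (h : IsPathBetween G l a b) : l.toFinset.card = l.length :=
  List.toFinset_card_of_nodup h.nodup

theorem reverse (h : IsPathBetween G l a b) : IsPathBetween G l.reverse b a where
  isChain := List.isChain_reverse.2 (h.isChain.imp fun _ _ hxy => hxy.symm)
  nodup := List.nodup_reverse.2 h.nodup
  head := by rw [List.head?_reverse, h.getLast]
  getLast := by rw [List.getLast?_reverse, h.head]

theorem append (h₁ : IsPathBetween G l₁ a u) (h₂ : IsPathBetween G l₂ v b) (huv : G.Adj u v)
    (hd : l₁.Disjoint l₂) : IsPathBetween G (l₁ ++ l₂) a b where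
  isChain := List.isChain_append.2 ⟨h₁.isChain, h₂.isChain, by simpa [h₁.getLast, h₂.head]⟩
  nodup := h₁.nodup.append h₂.nodup hd
  head := by simp [h₁.head]
  getLast := by simp [h₂.getLast]

theorem cons (h : IsPathBetween G l a b) (hv : v ∉ l) (hva : G.Adj v a) :
    IsPathBetween G (v :: l) v b :=
  (singleton v).append h hva (List.singleton_disjoint.2 hv)

theorem concat (h : IsPathBetween G l a b) (hv : v ∉ l) (hbv : G.Adj b v) :
    IsPathBetween G (l ++ [v]) a v :=
  h.append (singleton v) hbv (List.disjoint_singleton.2 hv)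

theorem left_of_append (h : IsPathBetween G (l₁ ++ l₂) a b) (hu : l₁.getLast? = some u) :
    IsPathBetween G l₁ a u where
  isChain := h.isChain.left_of_append
  nodup := h.nodup.of_append_left
  head := by
    rw [← h.head, List.head?_append_of_ne_nil]
    rintro rfl
    simp at hu
  getLast := hu

theorem right_of_append (h : IsPathBetween G (l₁ ++ l₂) a b) (hv : l₂.head? = some v) :
    IsPathBetween G l₂ v b where
  isChain := h.isChain.right_of_append
  nodup := h.nodup.of_append_right
  head := hv
  getLast := by
    rw [← h.getLast, List.getLast?_append_of_ne_nil]
    rintro rfl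
    simp at hv

theorem disjoint_of_append (h : IsPathBetween G (l₁ ++ l₂) a b) : l₁.Disjoint l₂ :=
  List.disjoint_of_nodup_append h.nodup

theorem hasCycleOn (h : IsPathBetween G l a b) (hba : G.Adj b a) : HasCycleOn G l.toFinset :=
  ⟨l, a, b, h, hba, rfl⟩

theorem hasCycleOn_of_crossing (h : IsPathBetween G (l₁ ++ u :: v :: l₂) a b) (hav : G.Adj a v)
    (hbu : G.Adj b u) : HasCycleOn G (l₁ ++ u :: v :: l₂).toFinset := by
  have h' : IsPathBetween G ((l₁ ++ [u]) ++ v :: l₂) a b := by simpa using h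
  have h₁ := h'.left_of_append (u := u) (by simp)
  have h₂ := h'.right_of_append (v := v) rfl
  have hd : (l₁ ++ [u]).reverse.Disjoint (v :: l₂) := fun z hz =>
    h'.disjoint_of_append (List.mem_reverse.1 hz)
  convert (h₁.reverse.append h₂ hav hd).hasCycleOn hbu using 1
  ext
  simp

theorem hasCycleOn_of_skip (h : IsPathBetween G (l₁ ++ u :: w :: v :: l₂) a b) (hav : G.Adj a v)
    (hbu : G.Adj b u) : HasCycleOn G ((l₁ ++ u :: w :: v :: l₂).toFinset.erase w) := by
  have h₁ : IsPathBetween G (l₁ ++ [u]) a u :=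
    left_of_append (l₂ := w :: v :: l₂) (by simpa using h) (by simp)
  have h₂ : IsPathBetween G (v :: l₂) v b :=
    right_of_append (l₁ := l₁ ++ [u, w]) (by simpa using h) rfl
  have hnd : (w :: ((l₁ ++ [u]) ++ v :: l₂)).Nodup := List.nodup_middle.1 (by simpa using h.nodup)
  have hd : (l₁ ++ [u]).Disjoint (v :: l₂).reverse :=
    List.disjoint_reverse_right.2 (List.disjoint_of_nodup_append hnd.of_cons)
  have hset : (l₁ ++ u :: w :: v :: l₂).toFinset.erase w =
      ((l₁ ++ [u]) ++ (v :: l₂).reverse).toFinset := by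
    rw [← Finset.erase_insert (s := ((l₁ ++ [u]) ++ (v :: l₂).reverse).toFinset) (a := w)]
    · congr 1
      ext
      simp
      tauto
    · simpa [and_left_comm, and_assoc] using hnd.notMem
  rw [hset]
  exact (h₁.append h₂.reverse hbu.symm hd).hasCycleOn hav.symm

end IsPathBetween

end Paths

section Counting

variable {α : Type*} {p q : α → Bool} {l : List α} {a : α}

theorem countP_tail_of_head?_eq (ha : l.head? = some a) (hp : p a = false) :
    l.tail.countP p = l.countP p := by
  cases l <;> simp_all

theorem countP_dropLast_of_getLast?_eq (ha : l.getLast? = some a) (hp : p a = false) :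
    l.dropLast.countP p = l.countP p := by
  simpa [List.tail_reverse] using countP_tail_of_head?_eq (l := l.reverse) (by simpa using ha) hp

theorem countP_le_countP_tail_add_one (p : α → Bool) (l : List α) :
    l.countP p ≤ l.tail.countP p + 1 := by
  cases l with
  | nil => simp
  | cons b l =>
    rw [List.countP_cons, List.tail_cons]
    split <;> omega

theorem countP_le_countP_dropLast_add_one (p : α → Bool) (l : List α) :
    l.countP p ≤ l.dropLast.countP p + 1 := by
  simpa [List.tail_reverse] using countP_le_countP_tail_add_one p l.reverse

theorem countP_tail_add_countP_dropLast_lt_length (hl : l ≠ [])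
    (h : ∀ l₁ u v l₂, l = l₁ ++ u :: v :: l₂ → p v → ¬ q u) :
    l.tail.countP p + l.dropLast.countP q < l.length := by
  induction l with
  | nil => exact absurd rfl hl
  | cons a l ih =>
    cases l with
    | nil => simp
    | cons b l =>
      have ih := ih (List.cons_ne_nil b l) fun l₁ u v l₂ hbl =>
        h (a :: l₁) u v l₂ (by rw [hbl, List.cons_append])
      have hab := h [] a b l rfl
      simp only [List.tail_cons, List.dropLast_cons_cons, List.countP_cons,
        List.length_cons] at ih ⊢
      grind

end Counting

section Degrees

variable {V : Type*} {G : SimpleGraph V} {A B W X : Finset V} {v : V}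

/-- The number of neighbours of `v` in `W`. -/
noncomputable def degIn (G : SimpleGraph V) (W : Finset V) (v : V) : ℕ :=
  (W.filter (G.Adj v)).card

/-- The sum of the degrees in the subgraph induced by `W`, that is, twice the number of its
edges. -/
noncomputable def degSum (G : SimpleGraph V) (W : Finset V) : ℕ :=
  ∑ v ∈ W, degIn G W v

theorem degIn_mono (h : A ⊆ B) (v : V) : degIn G A v ≤ degIn G B v :=
  Finset.card_le_card (Finset.filter_subset_filter _ h)

theorem degIn_lt_card (hv : v ∈ W) : degIn G W v < W.card :=
  Finset.card_lt_card (Finset.filter_ssubset.2 ⟨v, hv, G.irrefl⟩)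

theorem degIn_eq_zero (h : ∀ w ∈ W, ¬ G.Adj v w) : degIn G W v = 0 :=
  Finset.card_eq_zero.2 (Finset.filter_eq_empty_iff.2 h)

theorem degIn_union (h : Disjoint A B) (v : V) :
    degIn G (A ∪ B) v = degIn G A v + degIn G B v := by
  rw [degIn, Finset.filter_union, Finset.card_union_of_disjoint (Finset.disjoint_filter_filter h)]
  rfl

theorem degIn_sdiff_add_degIn (h : X ⊆ W) (v : V) :
    degIn G (W \ X) v + degIn G X v = degIn G W v := by
  rw [← degIn_union Finset.sdiff_disjoint, Finset.sdiff_union_of_subset h]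

theorem degIn_toFinset {l : List V} (h : l.Nodup) (v : V) :
    degIn G l.toFinset v = l.countP (G.Adj v ·) := by
  rw [degIn, List.countP_eq_length_filter, ← List.toFinset_card_of_nodup (h.filter _),
    List.toFinset_filter]
  simp

theorem sum_degIn_comm (A B : Finset V) : ∑ a ∈ A, degIn G B a = ∑ b ∈ B, degIn G A b := by
  simp only [degIn, Finset.card_filter]
  rw [Finset.sum_comm]
  simp only [G.adj_comm]

theorem degSum_union (h : Disjoint A B) :
    degSum G (A ∪ B) = degSum G A + degSum G B + 2 * ∑ a ∈ A, degIn G B a := by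
  simp only [degSum, Finset.sum_union h, degIn_union h, Finset.sum_add_distrib]
  rw [sum_degIn_comm B A]
  ring

theorem degSum_eq_degSum_sdiff_add (h : X ⊆ W) :
    degSum G W = degSum G (W \ X) + degSum G X + 2 * ∑ x ∈ X, degIn G (W \ X) x := by
  have hunion := degSum_union (G := G) (Finset.disjoint_sdiff (s := X) (t := W))
  rw [Finset.union_sdiff_of_subset h] at hunion
  omega

theorem degSum_le_card_mul (W : Finset V) : degSum G W ≤ W.card * (W.card - 1) :=
  Finset.sum_le_card_nsmul _ _ _ fun _ hv => Nat.le_sub_one_of_lt (degIn_lt_card hv)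

theorem degSum_eq_degSum_erase_add (h : v ∈ W) :
    degSum G W = degSum G (W.erase v) + 2 * degIn G W v := by
  have hv : degIn G {v} v = 0 := degIn_eq_zero (by simp)
  have hv' : degSum G {v} = 0 := by rw [degSum, Finset.sum_singleton, hv]
  have hvW := Finset.singleton_subset_iff.2 h
  rw [degSum_eq_degSum_sdiff_add hvW, ← degIn_sdiff_add_degIn hvW, Finset.sum_singleton, hv, hv',
    Finset.sdiff_singleton_eq_erase, add_zero, add_zero]

theorem two_mul_edgeCount [Fintype V] : 2 * edgeCount G = degSum G Finset.univ := by
  rw [edgeCount, ← coe_edgeFinset, Set.ncard_coe_finset, ← sum_degrees_eq_twice_card_edges]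
  refine Finset.sum_congr rfl fun v _ => ?_
  rw [degIn, ← card_neighborFinset_eq_degree, neighborFinset_eq_filter]

end Degrees

section OreClosing

variable {V : Type*} {G : SimpleGraph V} {l l₁ l₂ X : List V} {a b u w x y : V}

theorem toFinset_append_reverse_append_reverse (l₁ l₂ X : List V) :
    (l₁ ++ (X.reverse ++ l₂.reverse)).toFinset = (l₁ ++ l₂).toFinset ∪ X.toFinset := by
  simp only [List.toFinset_append, List.toFinset_reverse, Finset.union_assoc,
    Finset.union_comm X.toFinset]

namespace IsPathBetween

theorem hasCycleOn_of_length_le_degIn (h : IsPathBetween G l a b)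
    (hdeg : l.length ≤ degIn G l.toFinset a + degIn G l.toFinset b) :
    HasCycleOn G l.toFinset := by
  by_contra hno
  have hlt := countP_tail_add_countP_dropLast_lt_length (p := (G.Adj a ·)) (q := (G.Adj b ·))
    h.ne_nil fun l₁ u v l₂ hl hav hbu => by
      subst hl
      exact hno (h.hasCycleOn_of_crossing (by simpa using hav) (by simpa using hbu))
  rw [countP_tail_of_head?_eq h.head (by simp), countP_dropLast_of_getLast?_eq h.getLast (by simp),
    ← degIn_toFinset h.nodup, ← degIn_toFinset h.nodup] at hlt
  omega

theorem append_reverse_append_reverse (h₁ : IsPathBetween G l₁ a u) (h₂ : IsPathBetween G l₂ b w)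
    (hX : IsPathBetween G X x y) (h₁₂ : l₁.Disjoint l₂) (h₁X : l₁.Disjoint X)
    (h₂X : l₂.Disjoint X) (huy : G.Adj u y) (hwx : G.Adj w x) :
    IsPathBetween G (l₁ ++ (X.reverse ++ l₂.reverse)) a b := by
  refine h₁.append (hX.reverse.append h₂.reverse hwx.symm ?_) huy ?_
  · simpa using h₂X.symm
  · simpa using ⟨h₁X, h₁₂⟩

theorem hasCycleOn_insert_of_adj (h₁ : IsPathBetween G l₁ a u) (h₂ : IsPathBetween G l₂ b w)
    (hX : IsPathBetween G X x y) (h₁₂ : l₁.Disjoint l₂) (h₁X : l₁.Disjoint X)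
    (h₂X : l₂.Disjoint X) (huy : G.Adj u y) (hwx : G.Adj w x) (hab : G.Adj a b) :
    HasCycleOn G ((l₁ ++ l₂).toFinset ∪ X.toFinset) := by
  rw [← toFinset_append_reverse_append_reverse]
  exact (append_reverse_append_reverse h₁ h₂ hX h₁₂ h₁X h₂X huy hwx).hasCycleOn hab.symm

-- Only crossings inside `l₁` or inside `l₂` are counted, so that the vertices of `X` do not
-- contribute to the degree condition.
theorem hasCycleOn_insert_of_lt_degIn (h₁ : IsPathBetween G l₁ a u) (h₂ : IsPathBetween G l₂ b w)
    (hX : IsPathBetween G X x y) (h₁₂ : l₁.Disjoint l₂) (h₁X : l₁.Disjoint X)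
    (h₂X : l₂.Disjoint X) (huy : G.Adj u y) (hwx : G.Adj w x)
    (hdeg : l₁.length + l₂.length <
      degIn G (l₁ ++ l₂).toFinset a + degIn G (l₁ ++ l₂).toFinset b) :
    HasCycleOn G ((l₁ ++ l₂).toFinset ∪ X.toFinset) := by
  have hp := append_reverse_append_reverse h₁ h₂ hX h₁₂ h₁X h₂X huy hwx
  rw [← toFinset_append_reverse_append_reverse]
  by_contra hno
  have hnocross : ∀ m₁ u v m₂, l₁ ++ (X.reverse ++ l₂.reverse) = m₁ ++ u :: v :: m₂ →
      G.Adj a v → ¬ G.Adj b u := fun m₁ u v m₂ hm hav hbu => by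
    rw [hm] at hp hno
    exact hno (hp.hasCycleOn_of_crossing hav hbu)
  have hlt₁ := countP_tail_add_countP_dropLast_lt_length (p := (G.Adj a ·)) (q := (G.Adj b ·))
    h₁.ne_nil fun m₁ u v m₂ hm => by
      simpa using hnocross m₁ u v (m₂ ++ (X.reverse ++ l₂.reverse)) (by simp [hm])
  have hlt₂ := countP_tail_add_countP_dropLast_lt_length (p := (G.Adj a ·)) (q := (G.Adj b ·))
    h₂.reverse.ne_nil fun m₁ u v m₂ hm => by
      simpa using hnocross (l₁ ++ X.reverse ++ m₁) u v m₂ (by simp [hm])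
  have ha₁ := countP_tail_of_head?_eq (p := (G.Adj a ·)) h₁.head (by simp)
  have hb₂ := countP_dropLast_of_getLast?_eq (p := (G.Adj b ·)) h₂.reverse.getLast (by simp)
  have ha₂ := countP_le_countP_tail_add_one (G.Adj a ·) l₂.reverse
  have hb₁ := countP_le_countP_dropLast_add_one (G.Adj b ·) l₁
  have hnodup := h₁.nodup.append h₂.nodup h₁₂
  rw [degIn_toFinset hnodup, degIn_toFinset hnodup, List.countP_append, List.countP_append] at hdeg
  rw [List.countP_reverse] at ha₂ hb₂
  rw [List.length_reverse] at hlt₂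
  omega

end IsPathBetween

end OreClosing

section PathMaps

variable {V : Type*} {G : SimpleGraph V} {m k : ℕ} {q : ℕ → V}

/-- `q 0, …, q m` are the consecutive vertices of a path of `G`; the values of `q` beyond `m` are
irrelevant. -/
structure IsPathMap (G : SimpleGraph V) (m : ℕ) (q : ℕ → V) : Prop where
  adj : ∀ k < m, G.Adj (q k) (q (k + 1))
  injOn : Set.InjOn q (Set.Iic m)

theorem IsPathBetween.exists_isPathMap {l : List V} {a b : V} (h : IsPathBetween G l a b)
    (hl : l.length = m + 1) :
    ∃ q, IsPathMap G m q ∧ q 0 = a ∧ q m = b ∧ l = (List.range (m + 1)).map q := by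
  have hq : ∀ k (hk : k < l.length), l.getD k a = l[k] := fun k hk => List.getD_eq_getElem _ _ hk
  refine ⟨(l.getD · a), ⟨fun k hk => ?_, fun i hi j hj hij => ?_⟩, ?_, ?_, ?_⟩
  · rw [hq k (by omega), hq (k + 1) (by omega)]
    exact List.isChain_iff_getElem.1 h.isChain k (by omega)
  · rw [Set.mem_Iic] at hi hj
    simp only [hq i (by omega), hq j (by omega)] at hij
    exact h.nodup.getElem_inj_iff.1 hij
  · simp only [List.getD_eq_getElem?_getD, ← List.head?_eq_getElem?, h.head, Option.getD_some]
  · have hlast := h.getLast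
    rw [List.getLast?_eq_getElem?, hl, Nat.add_sub_cancel] at hlast
    simp only [List.getD_eq_getElem?_getD, hlast, Option.getD_some]
  · exact List.ext_getElem (by simp [hl]) fun k hk _ => by simp [hk]

namespace IsPathMap

theorem isPathBetween (h : IsPathMap G m q) :
    IsPathBetween G ((List.range (m + 1)).map q) (q 0) (q m) where
  isChain := by
    rw [List.isChain_map, List.isChain_range]
    exact fun k hk => h.adj k (by omega)
  nodup := List.nodup_range.map_on fun i hi j hj => by
    rw [List.mem_range, Nat.lt_succ_iff] at hi hj
    exact fun hij => h.injOn hi hj hij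
  head := by simp [List.range_succ_eq_map]
  getLast := by simp [List.range_succ]

theorem injOn_range (h : IsPathMap G m q) : Set.InjOn q (Finset.range (m + 1)) :=
  h.injOn.mono fun _ hk => Nat.lt_succ_iff.1 (Finset.mem_range.1 hk)

theorem degIn_image (h : IsPathMap G m q) (v : V) :
    degIn G ((Finset.range (m + 1)).image q) v =
      ((Finset.range (m + 1)).filter fun k => G.Adj v (q k)).card := by
  rw [degIn, Finset.filter_image, Finset.card_image_of_injOn]
  exact h.injOn_range.mono (Finset.coe_subset.2 (Finset.filter_subset _ _))

theorem toFinset_map_range (q : ℕ → V) (m : ℕ) :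
    ((List.range m).map q).toFinset = (Finset.range m).image q := by
  ext
  simp

theorem hasCycleOn_of_crossing (h : IsPathMap G m q) (hk : k < m) (h₀ : G.Adj (q 0) (q (k + 1)))
    (hm : G.Adj (q m) (q k)) : HasCycleOn G ((Finset.range (m + 1)).image q) := by
  have hsplit : (List.range (m + 1)).map q = ((List.range (m + 1)).map q).take k ++
      q k :: q (k + 1) :: ((List.range (m + 1)).map q).drop (k + 2) :=
    List.ext_getElem? fun j => by grind
  have hp := h.isPathBetween
  rw [hsplit] at hp
  have hc := hp.hasCycleOn_of_crossing h₀ hm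
  rwa [← hsplit, toFinset_map_range] at hc

theorem hasCycleOn_of_skip (h : IsPathMap G m q) (hk : k + 1 < m)
    (h₀ : G.Adj (q 0) (q (k + 2))) (hm : G.Adj (q m) (q k)) :
    HasCycleOn G (((Finset.range (m + 1)).image q).erase (q (k + 1))) := by
  obtain ⟨l₁, l₂, hsplit⟩ : ∃ l₁ l₂,
      (List.range (m + 1)).map q = l₁ ++ q k :: q (k + 1) :: q (k + 2) :: l₂ :=
    ⟨((List.range (m + 1)).map q).take k, ((List.range (m + 1)).map q).drop (k + 3),
      List.ext_getElem? fun j => by grind⟩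
  have hp := h.isPathBetween
  rw [← toFinset_map_range, hsplit] at *
  exact hp.hasCycleOn_of_skip h₀ hm

/-- The sequence obtained from `q` by reversing its initial segment `q 0, …, q i`. -/
def rotation (q : ℕ → V) (i k : ℕ) : V :=
  if k ≤ i then q (i - k) else q k

theorem isPathMap_rotation {i : ℕ} (h : IsPathMap G m q) (hi : i < m)
    (h₀ : G.Adj (q 0) (q (i + 1))) : IsPathMap G m (rotation q i) where
  adj k hk := by
    rcases lt_trichotomy k i with hki | rfl | hik
    · have hadj := h.adj (i - (k + 1)) (by omega)
      rw [show i - (k + 1) + 1 = i - k by omega] at hadj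
      simpa [rotation, hki.le, Nat.succ_le_of_lt hki] using hadj.symm
    · simpa [rotation] using h₀
    · simpa [rotation, hik.not_ge, (Nat.lt_succ_of_lt hik).not_ge] using h.adj k hk
  injOn j hj k hk hjk := by
    have hinj : ∀ j ≤ m, ∀ k ≤ m, q j = q k → j = k := fun j hj k hk => h.injOn.eq_iff hj hk |>.1
    grind [rotation]

theorem image_rotation (q : ℕ → V) {i : ℕ} (hi : i ≤ m) :
    (Finset.range (m + 1)).image (rotation q i) = (Finset.range (m + 1)).image q := by
  ext v
  simp only [Finset.mem_image, Finset.mem_range]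
  constructor
  · rintro ⟨k, hk, rfl⟩
    rcases le_or_gt k i with hki | hik
    · exact ⟨i - k, by omega, by simp [rotation, hki]⟩
    · exact ⟨k, hk, by simp [rotation, hik.not_ge]⟩
  · rintro ⟨k, hk, rfl⟩
    rcases le_or_gt k i with hki | hik
    · exact ⟨i - k, by omega, by simp [rotation, Nat.sub_sub_self hki]⟩
    · exact ⟨k, hk, by simp [rotation, hik.not_ge]⟩

end IsPathMap

end PathMaps

section Cycles

variable {V : Type*} {G : SimpleGraph V} {N : ℕ} {f : ZMod N → V} {i i' j : ZMod N}

/-- `f` enumerates the vertices of a cycle of length `N` of `G` in cyclic order. -/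
structure IsCycleMap (G : SimpleGraph V) (f : ZMod N → V) : Prop where
  injective : Function.Injective f
  adj : ∀ i, G.Adj (f i) (f (i + 1))

/-- The `m` consecutive vertices of the cycle `f` starting at index `i`. -/
def arc (f : ZMod N → V) (i : ZMod N) (m : ℕ) : List V :=
  (List.range m).map fun k : ℕ => f (i + k)

theorem length_arc (f : ZMod N → V) (i : ZMod N) (m : ℕ) : (arc f i m).length = m := by
  simp [arc]

theorem mem_arc {m : ℕ} {v : V} : v ∈ arc f i m ↔ ∃ k < m, f (i + (k : ℕ)) = v := by
  simp [arc]

theorem arc_add (f : ZMod N → V) (i : ZMod N) (m m' : ℕ) :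
    arc f i (m + m') = arc f i m ++ arc f (i + m) m' := by
  simp [arc, List.range_add, add_assoc]

theorem toFinset_arc [NeZero N] (f : ZMod N → V) (i : ZMod N) :
    (arc f i N).toFinset = Finset.univ.image f := by
  ext v
  simp only [List.mem_toFinset, mem_arc, Finset.mem_image, Finset.mem_univ, true_and]
  constructor
  · rintro ⟨k, -, rfl⟩
    exact ⟨_, rfl⟩
  · rintro ⟨j, rfl⟩
    exact ⟨(j - i).val, ZMod.val_lt _, by simp⟩

theorem image_neg [NeZero N] (f : ZMod N → V) :
    (Finset.univ.image fun i => f (-i)) = Finset.univ.image f := by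
  ext v
  simp only [Finset.mem_image, Finset.mem_univ, true_and]
  exact (Equiv.neg _).exists_congr_left.trans (by simp)

theorem HasCycleOn.exists_isCycleMap [NeZero N] {T : Finset V} (h : HasCycleOn G T)
    (hT : T.card = N) : ∃ f : ZMod N → V, IsCycleMap G f ∧ Finset.univ.image f = T := by
  obtain ⟨l, a, b, hl, hba, rfl⟩ := h
  obtain ⟨m, rfl⟩ := Nat.exists_eq_succ_of_ne_zero (NeZero.ne N)
  rw [hl.card_toFinset] at hT
  obtain ⟨q, hq, rfl, rfl, rfl⟩ := hl.exists_isPathMap hT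
  have hle : ∀ i : ZMod (m + 1), i.val ≤ m := fun i => Nat.lt_succ_iff.1 (ZMod.val_lt i)
  refine ⟨fun i => q i.val, ⟨fun i j hij => ZMod.val_injective _ (hq.injOn (hle i) (hle j) hij),
    fun i => ?_⟩, ?_⟩
  · rw [ZMod.val_add, ZMod.val_one_eq_one_mod, Nat.add_mod_mod]
    rcases (hle i).lt_or_eq with hi | hi
    · rw [Nat.mod_eq_of_lt (by omega)]
      exact hq.adj _ hi
    · rwa [hi, Nat.mod_self]
  · rw [IsPathMap.toFinset_map_range]
    ext v
    simp only [Finset.mem_image, Finset.mem_univ, true_and, Finset.mem_range]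
    constructor
    · rintro ⟨i, rfl⟩
      exact ⟨i.val, ZMod.val_lt i, rfl⟩
    · rintro ⟨k, hk, rfl⟩
      exact ⟨k, by rw [ZMod.val_cast_of_lt hk]⟩

namespace IsCycleMap

theorem neg (hf : IsCycleMap G f) : IsCycleMap G fun i => f (-i) where
  injective := hf.injective.comp neg_injective
  adj i := by simpa using (hf.adj (-(i + 1))).symm

theorem card_image [NeZero N] (hf : IsCycleMap G f) : (Finset.univ.image f).card = N := by
  rw [Finset.card_image_of_injective _ hf.injective, Finset.card_univ, ZMod.card]

theorem isPathMap (hf : IsCycleMap G f) (i : ZMod N) {m : ℕ} (hm : m < N) :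
    IsPathMap G m fun k => f (i + k) where
  adj k _ := by simpa [add_assoc] using hf.adj (i + k)
  injOn k hk k' hk' hkk' := by
    rw [Set.mem_Iic] at hk hk'
    have hmod := add_left_cancel (hf.injective hkk')
    rwa [ZMod.natCast_eq_natCast_iff', Nat.mod_eq_of_lt (by omega),
      Nat.mod_eq_of_lt (by omega)] at hmod

theorem isPathBetween_arc (hf : IsCycleMap G f) {m : ℕ} (hm₀ : 0 < m) (hmN : m ≤ N)
    (hm : i + m = j + 1) : IsPathBetween G (arc f i m) (f i) (f j) := by
  obtain ⟨m, rfl⟩ := Nat.exists_eq_succ_of_ne_zero hm₀.ne'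
  obtain rfl : j = i + m := by
    push_cast at hm
    linear_combination -hm
  simpa [arc] using (hf.isPathMap i hmN).isPathBetween

theorem hasCycleOn [NeZero N] (hf : IsCycleMap G f) : HasCycleOn G (Finset.univ.image f) := by
  rw [← toFinset_arc f 0]
  exact (hf.isPathBetween_arc (j := -1) (NeZero.pos N) le_rfl (by simp)).hasCycleOn
    (by simpa using hf.adj (-1))

theorem exists_arcs [NeZero N] (hf : IsCycleMap G f) (hii : i ≠ i') :
    ∃ l₁ l₂, IsPathBetween G l₁ (f (i + 1)) (f i') ∧ IsPathBetween G l₂ (f (i' + 1)) (f i) ∧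
      l₁.Disjoint l₂ ∧ l₁.length + l₂.length = N ∧
        (l₁ ++ l₂).toFinset = Finset.univ.image f := by
  have hm₀ : 0 < (i' - i).val :=
    Nat.pos_of_ne_zero ((ZMod.val_ne_zero _).2 (sub_ne_zero.2 hii.symm))
  have hmN := ZMod.val_lt (i' - i)
  have hm : ((i' - i).val : ZMod N) = i' - i := ZMod.natCast_zmod_val _
  generalize (i' - i).val = m at hm₀ hmN hm
  have hsplit : arc f (i + 1) N = arc f (i + 1) m ++ arc f (i' + 1) (N - m) := by
    rw [← show i + 1 + (m : ZMod N) = i' + 1 by rw [hm]; ring, ← arc_add,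
      Nat.add_sub_of_le hmN.le]
  have hp := hf.isPathBetween_arc (i := i + 1) (j := i) (NeZero.pos N) le_rfl (by simp)
  refine ⟨_, _, hf.isPathBetween_arc hm₀ hmN.le (by rw [hm]; ring),
    hf.isPathBetween_arc (by omega) (Nat.sub_le N m) ?_, (hsplit ▸ hp).disjoint_of_append, ?_, ?_⟩
  · rw [Nat.cast_sub hmN.le, hm, ZMod.natCast_self]
    ring
  · rw [length_arc, length_arc, Nat.add_sub_of_le hmN.le]
  · rw [← hsplit, toFinset_arc]

variable {X : List V} {x y : V}

theorem hasCycleOn_insert [NeZero N] (hf : IsCycleMap G f) (hii : i ≠ i')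
    (hX : IsPathBetween G X x y) (hfX : ∀ j, f j ∉ X) (hix : G.Adj (f i) x)
    (hiy : G.Adj (f i') y)
    (hsucc : G.Adj (f (i + 1)) (f (i' + 1)) ∨
      N < degIn G (Finset.univ.image f) (f (i + 1)) +
        degIn G (Finset.univ.image f) (f (i' + 1))) :
    HasCycleOn G (Finset.univ.image f ∪ X.toFinset) := by
  obtain ⟨l₁, l₂, h₁, h₂, h₁₂, hlen, hset⟩ := hf.exists_arcs hii
  have hdisj : (l₁ ++ l₂).Disjoint X := fun v hv hvX => by
    rw [← List.mem_toFinset, hset, Finset.mem_image] at hv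
    obtain ⟨j, -, rfl⟩ := hv
    exact hfX j hvX
  obtain ⟨h₁X, h₂X⟩ := List.disjoint_append_left.1 hdisj
  rw [← hset] at hsucc ⊢
  rcases hsucc with hadj | hdeg
  · exact h₁.hasCycleOn_insert_of_adj h₂ hX h₁₂ h₁X h₂X hiy hix hadj
  · exact h₁.hasCycleOn_insert_of_lt_degIn h₂ hX h₁₂ h₁X h₂X hiy hix (hlen ▸ hdeg)

theorem hasCycleOn_insert_pred [NeZero N] (hf : IsCycleMap G f) (hii : i ≠ i')
    (hX : IsPathBetween G X x y) (hfX : ∀ j, f j ∉ X) (hix : G.Adj (f i) x)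
    (hiy : G.Adj (f i') y)
    (hpred : G.Adj (f (i - 1)) (f (i' - 1)) ∨
      N < degIn G (Finset.univ.image f) (f (i - 1)) +
        degIn G (Finset.univ.image f) (f (i' - 1))) :
    HasCycleOn G (Finset.univ.image f ∪ X.toFinset) := by
  have h := hf.neg.hasCycleOn_insert (i := -i) (i' := -i') (neg_injective.ne hii) hX
    (fun j => hfX _) (by simpa using hix) (by simpa using hiy)
    (by simpa [image_neg, neg_add_eq_sub, neg_add, sub_eq_add_neg] using hpred)
  rwa [image_neg] at h

end IsCycleMap

theorem HasCycleOn.exists_isPathBetween_insert {T : Finset V} {v w : V} (h : HasCycleOn G T)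
    (hv : v ∈ T) (hw : w ∉ T) (hvw : G.Adj v w) :
    ∃ l b, IsPathBetween G l w b ∧ l.toFinset = insert w T := by
  obtain ⟨N, hN⟩ : ∃ N, T.card = N := ⟨_, rfl⟩
  have : NeZero N := ⟨hN ▸ Finset.card_ne_zero_of_mem hv⟩
  obtain ⟨f, hf, rfl⟩ := h.exists_isCycleMap hN
  obtain ⟨i, -, rfl⟩ := Finset.mem_image.1 hv
  have hp := hf.isPathBetween_arc (i := i) (j := i - 1) (NeZero.pos _) le_rfl (by simp)
  refine ⟨_, _, hp.cons ?_ hvw.symm, ?_⟩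
  · rwa [← List.mem_toFinset, toFinset_arc]
  · rw [List.toFinset_cons, toFinset_arc]

end Cycles

section Copies

variable {V : Type*} {G : SimpleGraph V} {l l₁ l₂ : List V} {m₁ m₂ : ℕ}

theorem adj_get_of_isChain (h : l.IsChain G.Adj) {i j : Fin l.length}
    (hij : (pathGraph l.length).Adj i j) : G.Adj (l.get i) (l.get j) := by
  wlog hlt : i.val + 1 = j.val generalizing i j
  · exact (this hij.symm ((pathGraph_adj.1 hij).resolve_left hlt)).symm
  · have hadj := List.isChain_iff_getElem.1 h i (by omega)
    simpa [hlt] using hadj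

theorem containsCopy_of_nodup_append (h₁ : l₁.IsChain G.Adj) (h₂ : l₂.IsChain G.Adj)
    (hnd : (l₁ ++ l₂).Nodup) :
    ContainsCopy G (pathGraph l₁.length ⊕g pathGraph l₂.length) := by
  obtain ⟨hnd₁, hnd₂, hd⟩ := List.nodup_append'.1 hnd
  refine ⟨Sum.elim l₁.get l₂.get, ?_, ?_⟩
  · exact (List.nodup_iff_injective_get.1 hnd₁).sumElim (List.nodup_iff_injective_get.1 hnd₂)
      fun i j hij => hd (List.get_mem l₁ i) (hij ▸ List.get_mem l₂ j)
  · rintro (i | i) (j | j) hij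
    · exact adj_get_of_isChain h₁ (by simpa using hij)
    · simp at hij
    · simp at hij
    · exact adj_get_of_isChain h₂ (by simpa using hij)

theorem containsCopy_of_le_length (h : l.IsChain G.Adj) (hnd : l.Nodup)
    (hl : m₁ + m₂ ≤ l.length) : ContainsCopy G (pathGraph m₁ ⊕g pathGraph m₂) := by
  have hdrop := h.drop m₁
  have hc := containsCopy_of_nodup_append (h.take m₁) (hdrop.take m₂) <| by
    rw [← List.take_add]
    exact hnd.sublist (List.take_sublist _ _)
  rwa [List.length_take, List.length_take, List.length_drop, min_eq_left (by omega),
    min_eq_left (by omega)] at hc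

end Copies

section DensestSets

variable {V : Type*} {G : SimpleGraph V} {S W X : Finset V} {c m : ℕ} {v : V}

/-- Among the sets `W` of at least `m` vertices, `S` maximizes `degSum G W - c * #W`, and no proper
subset of `S` does. The two differences are compared without subtraction. -/
structure IsDensest (G : SimpleGraph V) (c m : ℕ) (S : Finset V) : Prop where
  le_card : m ≤ S.card
  degSum_add_le : ∀ W : Finset V, m ≤ W.card →
    degSum G W + c * S.card ≤ degSum G S + c * W.card
  degSum_add_lt : ∀ W ⊂ S, m ≤ W.card → degSum G W + c * S.card < degSum G S + c * W.card

theorem exists_isDensest [Fintype V] (G : SimpleGraph V) (c : ℕ) (hm : m ≤ Fintype.card V) :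
    ∃ S, IsDensest G c m S := by
  obtain ⟨S, hS, hmax⟩ := (Finset.univ.filter fun W : Finset V => m ≤ W.card).exists_max_image
    (fun W => toLex ((degSum G W : ℤ) - c * W.card, -(W.card : ℤ)))
    ⟨Finset.univ, by simpa using hm⟩
  simp only [Finset.mem_filter, Finset.mem_univ, true_and] at hS hmax
  simp only [Prod.Lex.toLex_le_toLex] at hmax
  refine ⟨S, hS, fun W hW => ?_, fun W hWS hW => ?_⟩
  · zify
    rcases hmax W hW with h | h <;> linarith [h]
  · have hcard := Finset.card_lt_card hWS
    zify at hcard ⊢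
    rcases hmax W hW with h | h <;> linarith [h]

namespace IsDensest

theorem mul_card_lt (h : IsDensest G c m S) (hXS : X ⊆ S) (hX : X.Nonempty)
    (hm : m ≤ (S \ X).card) :
    c * X.card < degSum G X + 2 * ∑ x ∈ X, degIn G (S \ X) x := by
  have hlt := h.degSum_add_lt _ (Finset.sdiff_ssubset hXS hX) hm
  have hsum := degSum_eq_degSum_sdiff_add (G := G) hXS
  rw [← Finset.card_sdiff_add_card_eq_card hXS] at hlt
  linarith

theorem lt_two_mul_degIn (h : IsDensest G c m S) (hm : m < S.card) (hv : v ∈ S) :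
    c < 2 * degIn G S v := by
  have hvS := Finset.erase_ssubset hv
  have hlt := h.degSum_add_lt _ hvS (by rw [Finset.card_erase_of_mem hv]; omega)
  have hsum := degSum_eq_degSum_erase_add (G := G) hv
  rw [← Finset.card_erase_add_one hv] at hlt
  linarith

end IsDensest

end DensestSets

section LongestPaths

variable {V : Type*} {G : SimpleGraph V} {S : Finset V} {l : List V} {a b w : V} {K m i : ℕ}
  {q : ℕ → V}

theorem exists_forall_length_le {α : Type*} {P : List α → Prop} {B : ℕ} (h : ∃ l, P l)
    (hB : ∀ l, P l → l.length ≤ B) : ∃ l, P l ∧ ∀ l', P l' → l'.length ≤ l.length := by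
  have hbdd : BddAbove (List.length '' {l | P l}) := ⟨B, by rintro _ ⟨l, hl, rfl⟩; exact hB l hl⟩
  obtain ⟨l, hl, hlen⟩ := Nat.sSup_mem (Set.Nonempty.image _ h) hbdd
  exact ⟨l, hl, fun l' hl' => hlen ▸ le_csSup hbdd ⟨l', hl', rfl⟩⟩

/-- `l` is a path from `a` to `b` with the greatest number of vertices among all paths of `G` that
stay in `S`. -/
structure IsLongestPathIn (G : SimpleGraph V) (S : Finset V) (l : List V) (a b : V) : Prop
    extends IsPathBetween G l a b where
  subset : l.toFinset ⊆ S
  longest : ∀ {l' : List V} {a' b' : V}, IsPathBetween G l' a' b' → l'.toFinset ⊆ S →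
    l'.length ≤ l.length

theorem exists_isLongestPathIn (G : SimpleGraph V) (hS : S.Nonempty) :
    ∃ l a b, IsLongestPathIn G S l a b := by
  obtain ⟨v, hv⟩ := hS
  obtain ⟨l, ⟨a, b, hl, hlS⟩, hmax⟩ := exists_forall_length_le (B := S.card)
    (P := fun l => ∃ a b, IsPathBetween G l a b ∧ l.toFinset ⊆ S)
    ⟨[v], v, v, .singleton v, by simpa using hv⟩ <| by
      rintro l ⟨a, b, hl, hlS⟩
      exact hl.card_toFinset ▸ Finset.card_le_card hlS
  exact ⟨l, a, b, hl, hlS, fun hl' hS' => hmax _ ⟨_, _, hl', hS'⟩⟩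

namespace IsLongestPathIn

theorem reverse (h : IsLongestPathIn G S l a b) : IsLongestPathIn G S l.reverse b a where
  toIsPathBetween := h.toIsPathBetween.reverse
  subset := by simpa only [List.toFinset_reverse] using h.subset
  longest hl' hS' := by simpa only [List.length_reverse] using h.longest hl' hS'

theorem mem_of_adj (h : IsLongestPathIn G S l a b) (hw : w ∈ S) (haw : G.Adj a w) : w ∈ l := by
  by_contra hwl
  have hle := h.longest (h.cons hwl haw.symm) (by
    rw [List.toFinset_cons]
    exact Finset.insert_subset hw h.subset)
  simp at hle

theorem degIn_toFinset_eq (h : IsLongestPathIn G S l a b) :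
    degIn G l.toFinset a = degIn G S a := by
  refine (degIn_mono h.subset a).antisymm (Finset.card_le_card fun w hw => ?_)
  rw [Finset.mem_filter] at hw ⊢
  exact ⟨List.mem_toFinset.2 (h.mem_of_adj hw.1 hw.2), hw.2⟩

theorem of_length_eq (h : IsLongestPathIn G S l a b) {l' : List V} {a' b' : V}
    (hl' : IsPathBetween G l' a' b') (hS' : l'.toFinset ⊆ S) (hlen : l'.length = l.length) :
    IsLongestPathIn G S l' a' b' :=
  ⟨hl', hS', fun hl'' hS'' => hlen ▸ h.longest hl'' hS''⟩

end IsLongestPathIn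

theorem eq_Icc_and_eq_Ico_of_add_notMem {A B : Finset ℕ} (hA : A ⊆ Finset.Icc 1 m)
    (hB : B ⊆ Finset.range m) (hm : m ≤ A.card + B.card) (h₁ : ∀ k ∈ B, k + 1 ∉ A)
    (h₂ : ∀ k ∈ B, k + 1 < m → k + 2 ∉ A) :
    A = Finset.Icc 1 A.card ∧ B = Finset.Ico A.card m := by
  have hB' : B.image (· + 1) ⊆ Finset.Icc 1 m := by
    intro k hk
    obtain ⟨j, hj, rfl⟩ := Finset.mem_image.1 hk
    have hjm := Finset.mem_range.1 (hB hj)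
    exact Finset.mem_Icc.2 (by omega)
  have hdisj : Disjoint A (B.image (· + 1)) := by
    rw [Finset.disjoint_right]
    rintro _ hk
    obtain ⟨j, hj, rfl⟩ := Finset.mem_image.1 hk
    exact h₁ j hj
  have hcB : (B.image (· + 1)).card = B.card :=
    Finset.card_image_of_injective _ (add_left_injective 1)
  have hunion : A ∪ B.image (· + 1) = Finset.Icc 1 m :=
    Finset.eq_of_subset_of_card_le (Finset.union_subset hA hB') <| by
      rw [Finset.card_union_of_disjoint hdisj, hcB, Nat.card_Icc]
      omega
  have hcard : A.card + B.card = m := by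
    rw [← hcB, ← Finset.card_union_of_disjoint hdisj, hunion, Nat.card_Icc, Nat.add_sub_cancel]
  have hsucc : ∀ k ∈ B, k + 1 < m → k + 1 ∈ B := by
    intro k hk hkm
    have hmem : k + 2 ∈ A ∪ B.image (· + 1) := hunion ▸ Finset.mem_Icc.2 (by omega)
    simpa [h₂ k hk hkm] using hmem
  have hIco : ∀ k ∈ B, Finset.Ico k m ⊆ B := fun k hk j hj => by
    rw [Finset.mem_Ico] at hj
    exact Nat.le_induction (P := fun j _ => j < m → j ∈ B) (fun _ => hk)
      (fun j _ ih hjm => hsucc j (ih (by omega)) hjm) j hj.1 hj.2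
  have hBeq : B = Finset.Ico A.card m := by
    refine Finset.eq_of_subset_of_card_le (fun k hk => ?_) (by rw [Nat.card_Ico]; omega)
    have hle := Finset.card_le_card (hIco k hk)
    have hkm := Finset.mem_range.1 (hB hk)
    rw [Nat.card_Ico] at hle
    exact Finset.mem_Ico.2 (by omega)
  refine ⟨Finset.eq_of_subset_of_card_le (fun k hk => ?_) (by simp), hBeq⟩
  have hkm := Finset.mem_Icc.1 (hA hk)
  refine Finset.mem_Icc.2 ⟨hkm.1, ?_⟩
  by_contra! hlt
  exact h₁ (k - 1) (hBeq ▸ Finset.mem_Ico.2 (by omega)) (by rwa [Nat.sub_add_cancel hkm.1])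

namespace IsPathMap

theorem filter_adj_zero_subset (G : SimpleGraph V) (m : ℕ) (q : ℕ → V) :
    ((Finset.range (m + 1)).filter fun k => G.Adj (q 0) (q k)) ⊆ Finset.Icc 1 m := fun k hk => by
  rw [Finset.mem_filter, Finset.mem_range] at hk
  have hk₀ : k ≠ 0 := by
    rintro rfl
    exact G.irrefl hk.2
  exact Finset.mem_Icc.2 (by omega)

theorem filter_adj_last_subset (G : SimpleGraph V) (m : ℕ) (q : ℕ → V) :
    ((Finset.range (m + 1)).filter fun k => G.Adj (q m) (q k)) ⊆ Finset.range m := fun k hk => by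
  rw [Finset.mem_filter, Finset.mem_range] at hk
  have hkm : k ≠ m := by
    rintro rfl
    exact G.irrefl hk.2
  exact Finset.mem_range.2 (by omega)

theorem adj_of_le_degIn_add_degIn (hq : IsPathMap G m q)
    (hC : ∀ T, HasCycleOn G T → T.card < m)
    (hm : m ≤ degIn G ((Finset.range (m + 1)).image q) (q 0) +
      degIn G ((Finset.range (m + 1)).image q) (q m)) :
    ∃ d ≤ m, degIn G ((Finset.range (m + 1)).image q) (q 0) = d ∧
      degIn G ((Finset.range (m + 1)).image q) (q m) = m - d ∧
      (∀ k ∈ Finset.Icc 1 d, G.Adj (q 0) (q k)) ∧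
      ∀ k ∈ Finset.Ico d m, G.Adj (q m) (q k) := by
  have hcard : ((Finset.range (m + 1)).image q).card = m + 1 := by
    rw [Finset.card_image_of_injOn hq.injOn_range, Finset.card_range]
  rw [hq.degIn_image, hq.degIn_image] at hm ⊢
  have hBsub := filter_adj_last_subset G m q
  obtain ⟨hA, hB⟩ := eq_Icc_and_eq_Ico_of_add_notMem (filter_adj_zero_subset G m q) hBsub hm
    (fun k hk hk' => by
      have hlt := hC _ (hq.hasCycleOn_of_crossing (Finset.mem_range.1 (hBsub hk))
        (Finset.mem_filter.1 hk').2 (Finset.mem_filter.1 hk).2)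
      omega)
    fun k hk hkm hk' => by
      have hlt := hC _ (hq.hasCycleOn_of_skip hkm (Finset.mem_filter.1 hk').2
        (Finset.mem_filter.1 hk).2)
      rw [Finset.card_erase_of_mem (Finset.mem_image_of_mem q (Finset.mem_range.2 (by omega))),
        hcard] at hlt
      omega
  refine ⟨_, ?_, rfl, ?_, fun k hk => ?_, fun k hk => ?_⟩
  · simpa using Finset.card_le_card (filter_adj_zero_subset G m q)
  · conv_lhs => rw [hB, Nat.card_Ico]
  · rw [← hA] at hk
    exact (Finset.mem_filter.1 hk).2
  · rw [← hB] at hk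
    exact (Finset.mem_filter.1 hk).2

theorem adj_of_isLongestPathIn (hq : IsPathMap G (2 * K) q)
    (h : IsLongestPathIn G S ((List.range (2 * K + 1)).map q) (q 0) (q (2 * K)))
    (hC : ∀ T, HasCycleOn G T → T.card < 2 * K) (hdeg : ∀ v ∈ S, K ≤ degIn G S v) :
    (∀ k ∈ Finset.Icc 1 K, G.Adj (q 0) (q k)) ∧
      ∀ k ∈ Finset.Ico K (2 * K), G.Adj (q (2 * K)) (q k) := by
  have h₀ := h.degIn_toFinset_eq
  have hlast := h.reverse.degIn_toFinset_eq
  rw [List.toFinset_reverse] at hlast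
  have hd₀ := hdeg _ (h.subset (List.mem_toFinset.2 h.head_mem))
  have hdlast := hdeg _ (h.subset (List.mem_toFinset.2 h.getLast_mem))
  rw [← h₀, toFinset_map_range] at hd₀
  rw [← hlast, toFinset_map_range] at hdlast
  obtain ⟨d, hdK, hd, hd', hadj⟩ := hq.adj_of_le_degIn_add_degIn hC (by omega)
  obtain rfl : d = K := by omega
  exact hadj

theorem exists_le_of_adj_of_isLongestPathIn (hq : IsPathMap G m q)
    (h : IsLongestPathIn G S ((List.range (m + 1)).map q) (q 0) (q m))
    (hcyc : ¬ HasCycleOn G ((Finset.range (m + 1)).image q)) (hK : K ≤ m)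
    (h₀ : ∀ k ∈ Finset.Icc 1 K, G.Adj (q 0) (q k))
    (hm : ∀ k ∈ Finset.Ico K m, G.Adj (q m) (q k)) (hi : i < K) (hw : w ∈ S)
    (hiw : G.Adj (q i) w) : ∃ k ≤ K, q k = w := by
  have hr := hq.isPathMap_rotation (i := i) (by omega) (h₀ _ (Finset.mem_Icc.2 (by omega)))
  have himage := image_rotation q (show i ≤ m by omega)
  have hlong : IsLongestPathIn G S ((List.range (m + 1)).map (rotation q i)) (q i) (q m) := by
    refine h.of_length_eq ?_ ?_ (by simp)
    · simpa [show ¬ m ≤ i by omega, rotation] using hr.isPathBetween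
    · rw [toFinset_map_range, himage, ← toFinset_map_range]
      exact h.subset
  obtain ⟨k, hk, rfl⟩ := List.mem_map.1 (hlong.mem_of_adj hw hiw)
  rw [List.mem_range] at hk
  rcases le_or_gt k i with hki | hik
  · exact ⟨i - k, by omega, by simp [rotation, hki]⟩
  rcases le_or_gt k K with hkK | hKk
  · exact ⟨k, hkK, by simp [rotation, hik.not_ge]⟩
  obtain ⟨k, rfl⟩ : ∃ j, k = j + 1 := ⟨k - 1, by omega⟩
  refine (hcyc (himage ▸ hr.hasCycleOn_of_crossing (k := k) (by omega) ?_ ?_)).elim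
  · simpa [rotation] using hiw
  · simpa [rotation, show ¬ m ≤ i by omega, show ¬ k ≤ i by omega] using
      hm k (Finset.mem_Ico.2 (by omega))

end IsPathMap

theorem IsLongestPathIn.exists_subset_degIn_sdiff_le_one (h : IsLongestPathIn G S l a b)
    (hl : l.length = 2 * K + 1) (hC : ∀ T, HasCycleOn G T → T.card < 2 * K)
    (hdeg : ∀ v ∈ S, K ≤ degIn G S v) :
    ∃ X ⊆ S, X.card = K ∧ K < (S \ X).card ∧ ∀ x ∈ X, degIn G (S \ X) x ≤ 1 := by
  obtain ⟨q, hq, rfl, rfl, rfl⟩ := h.exists_isPathMap hl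
  obtain ⟨h₀, hlast⟩ := hq.adj_of_isLongestPathIn h hC hdeg
  have hS := h.subset
  rw [IsPathMap.toFinset_map_range] at hS
  have hcard : ∀ m ≤ 2 * K + 1, ((Finset.range m).image q).card = m := fun m hm => by
    rw [Finset.card_image_of_injOn (hq.injOn_range.mono (by simpa using hm)), Finset.card_range]
  have hcyc : ¬ HasCycleOn G ((Finset.range (2 * K + 1)).image q) := fun hc => by
    have hlt := hC _ hc
    rw [hcard _ le_rfl] at hlt
    omega
  have hXS : (Finset.range K).image q ⊆ S :=
    (Finset.image_subset_image (Finset.range_subset_range.2 (by omega))).trans hS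
  refine ⟨_, hXS, hcard K (by omega), ?_, fun x hx => ?_⟩
  · have hle := Finset.card_le_card hS
    rw [hcard _ le_rfl, ← Finset.card_sdiff_add_card_eq_card hXS, hcard K (by omega)] at hle
    omega
  · obtain ⟨i, hi, rfl⟩ := Finset.mem_image.1 hx
    have hsub : (S \ (Finset.range K).image q).filter (G.Adj (q i)) ⊆ {q K} := fun w hw => by
      rw [Finset.mem_filter, Finset.mem_sdiff] at hw
      obtain ⟨k, hk, rfl⟩ := hq.exists_le_of_adj_of_isLongestPathIn h hcyc (by omega) h₀ hlast
        (Finset.mem_range.1 hi) hw.1.1 hw.2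
      obtain rfl : k = K := hk.antisymm (not_lt.1 fun hkK =>
        hw.1.2 (Finset.mem_image_of_mem q (Finset.mem_range.2 hkK)))
      exact Finset.mem_singleton_self _
    exact Finset.card_le_card hsub

theorem IsLongestPathIn.not_adj_of_hasCycleOn (h : IsLongestPathIn G S l a b)
    (hcyc : HasCycleOn G l.toFinset) {v : V} (hv : v ∈ l.toFinset) (hw : w ∈ S \ l.toFinset) :
    ¬ G.Adj v w := fun hvw => by
  rw [Finset.mem_sdiff] at hw
  obtain ⟨l', b', hl', hset⟩ := hcyc.exists_isPathBetween_insert hv hw.2 hvw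
  have hle := h.longest hl' (hset ▸ Finset.insert_subset hw.1 h.subset)
  rw [← hl'.card_toFinset, hset, Finset.card_insert_of_notMem hw.2, h.card_toFinset] at hle
  omega

end LongestPaths

section Hamiltonicity

variable {V : Type*} {G : SimpleGraph V} {S : Finset V} {l : List V} {a b : V} {K : ℕ}

theorem IsDensest.exists_lt_degIn_sdiff (h : IsDensest G (2 * (K - 1)) (K + 1) S) {X : Finset V}
    (hXS : X ⊆ S) (hX : X.card = K) (hK : 2 < K) (hKX : K < (S \ X).card) :
    ∃ x ∈ X, 1 < degIn G (S \ X) x := by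
  by_contra! hle
  have hlt := h.mul_card_lt hXS (Finset.card_pos.1 (by omega)) hKX
  have hX' := degSum_le_card_mul (G := G) X
  have hsum := Finset.sum_le_card_nsmul X _ 1 hle
  rw [hX] at hlt hX' hsum
  obtain ⟨k, rfl⟩ := Nat.exists_eq_add_of_lt hK
  simp only [smul_eq_mul, mul_one, show 2 + k + 1 - 1 = k + 2 by omega] at hlt hX' hsum
  nlinarith

theorem IsDensest.eq_of_not_adj (h : IsDensest G (2 * (K - 1)) (K + 1) S) {X : Finset V}
    (hXS : X ⊆ S) (hX : X.Nonempty) (hXK : X.card < 2 * K) (hdeg : ∀ v ∈ S, K ≤ degIn G S v)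
    (hadj : ∀ v ∈ X, ∀ w ∈ S \ X, ¬ G.Adj v w) : X = S := by
  by_contra hne
  obtain ⟨w, hw⟩ := Finset.sdiff_nonempty.2 fun hSX => hne (hXS.antisymm hSX)
  have hw₀ : degIn G X w = 0 := degIn_eq_zero fun v hv hwv => hadj v hv w hw hwv.symm
  have hcard : K < (S \ X).card := by
    have hle := hdeg w (Finset.mem_sdiff.1 hw).1
    rw [← degIn_sdiff_add_degIn hXS, hw₀] at hle
    exact lt_of_le_of_lt hle (degIn_lt_card hw)
  have hlt := h.mul_card_lt hXS hX hcard
  rw [Finset.sum_eq_zero fun v hv => degIn_eq_zero (hadj v hv), mul_comm] at hlt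
  have hle : X.card * (X.card - 1) ≤ X.card * (2 * (K - 1)) := Nat.mul_le_mul_left _ (by omega)
  have hX' := degSum_le_card_mul (G := G) X
  omega

theorem IsDensest.hasCycleOn (h : IsDensest G (2 * (K - 1)) (K + 1) S) (hK : 2 < K)
    (hS : K + 1 < S.card)
    (hP : ∀ l a b, IsPathBetween G l a b → l.length ≤ 2 * K + 1)
    (hC : ∀ T, HasCycleOn G T → T.card < 2 * K) : HasCycleOn G S := by
  have hdeg : ∀ v ∈ S, K ≤ degIn G S v := fun v hv => by
    have := h.lt_two_mul_degIn hS hv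
    omega
  obtain ⟨l, a, b, hl⟩ := exists_isLongestPathIn G (Finset.card_pos.1 (by omega : 0 < S.card))
  have hlen := hP l a b hl.toIsPathBetween
  rcases Nat.lt_or_ge (2 * K) l.length with hlt | hle
  · obtain ⟨X, hXS, hX, hKX, hX₁⟩ :=
      hl.exists_subset_degIn_sdiff_le_one (by omega) hC hdeg
    obtain ⟨x, hx, hx₁⟩ := h.exists_lt_degIn_sdiff hXS hX hK hKX
    exact absurd (hX₁ x hx) hx₁.not_ge
  · have ha := hdeg a (hl.subset (List.mem_toFinset.2 hl.head_mem))
    have hb := hdeg b (hl.subset (List.mem_toFinset.2 hl.getLast_mem))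
    rw [← hl.degIn_toFinset_eq] at ha
    rw [← hl.reverse.degIn_toFinset_eq, List.toFinset_reverse] at hb
    have hcyc := hl.hasCycleOn_of_length_le_degIn (by omega)
    rwa [← h.eq_of_not_adj hl.subset ⟨a, List.mem_toFinset.2 hl.head_mem⟩ (hC _ hcyc) hdeg
      fun v hv w => hl.not_adj_of_hasCycleOn hcyc hv]

end Hamiltonicity

section CycleThrough

variable {V : Type*} {G : SimpleGraph V} {K N : ℕ} {S : Finset V} {f : ZMod N → V}
  {X : List V} {x y : V} {i i' o : ZMod N}

theorem IsCycleMap.one_lt [NeZero N] (hf : IsCycleMap G f) : 1 < N := by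
  refine (Nat.one_le_iff_ne_zero.2 (NeZero.ne N)).lt_of_ne ?_
  rintro rfl
  exact (hf.adj 0).ne (congrArg f (Subsingleton.elim _ _))

theorem IsCycleMap.toFinset_arc_eq_erase [NeZero N] (hf : IsCycleMap G f) (o : ZMod N) :
    (arc f (o + 1) (N - 1)).toFinset = (Finset.univ.image f).erase (f o) := by
  have hsplit : arc f (o + 1) N = arc f (o + 1) (N - 1) ++ [f o] := by
    obtain ⟨m, rfl⟩ := Nat.exists_eq_succ_of_ne_zero (NeZero.ne N)
    have hm : o + 1 + (m : ZMod (m + 1)) = o := by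
      rw [add_assoc, add_comm 1, ← Nat.cast_succ, ZMod.natCast_self, add_zero]
    simpa [arc, hm] using arc_add f (o + 1) m 1
  have hnodup := (hf.isPathBetween_arc (i := o + 1) (j := o) (NeZero.pos N) le_rfl (by simp)).nodup
  rw [hsplit] at hnodup
  rw [← toFinset_arc f (o + 1), hsplit, List.toFinset_append, List.toFinset_cons,
    List.toFinset_nil, insert_empty_eq, Finset.union_comm, ← Finset.insert_eq,
    Finset.erase_insert]
  simpa using List.disjoint_of_nodup_append hnodup

theorem IsCycleMap.hasCycleOn_replace [NeZero N] (hf : IsCycleMap G f)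
    (hX : IsPathBetween G X x y) (hfX : ∀ j, f j ∉ X) (hox : G.Adj (f (o - 1)) x)
    (hoy : G.Adj y (f (o + 1))) :
    HasCycleOn G ((Finset.univ.image f).erase (f o) ∪ X.toFinset) := by
  have hN := hf.one_lt
  have hp : IsPathBetween G (arc f (o + 1) (N - 1)) (f (o + 1)) (f (o - 1)) :=
    hf.isPathBetween_arc (by omega) (Nat.sub_le _ _) (by simp [Nat.cast_sub hN.le])
  rw [← hf.toFinset_arc_eq_erase, ← List.toFinset_append]
  refine (hp.append hX hox fun v hv hvX => ?_).hasCycleOn hoy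
  obtain ⟨k, -, rfl⟩ := mem_arc.1 hv
  exact hfX _ hvX

theorem disjoint_image_toFinset [NeZero N] (hfX : ∀ j, f j ∉ X) :
    Disjoint (Finset.univ.image f) X.toFinset := by
  rw [Finset.disjoint_left]
  intro v hv hvX
  obtain ⟨j, -, rfl⟩ := Finset.mem_image.1 hv
  exact hfX j (List.mem_toFinset.1 hvX)

/-- The indices of the vertices of the cycle `f` outside `S`. -/
noncomputable def offIdx [NeZero N] (S : Finset V) (f : ZMod N → V) : Finset (ZMod N) :=
  Finset.univ.filter fun i => f i ∉ S

/-- The indices of the neighbours of `v` on the cycle `f`. -/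
noncomputable def nbrIdx [NeZero N] (G : SimpleGraph V) (f : ZMod N → V) (v : V) :
    Finset (ZMod N) :=
  Finset.univ.filter fun i => G.Adj v (f i)

theorem mem_offIdx [NeZero N] : i ∈ offIdx S f ↔ f i ∉ S := by simp [offIdx]

theorem mem_nbrIdx [NeZero N] : i ∈ nbrIdx G f x ↔ G.Adj x (f i) := by simp [nbrIdx]

theorem card_nbrIdx [NeZero N] (hf : Function.Injective f) (v : V) :
    (nbrIdx G f v).card = degIn G (Finset.univ.image f) v := by
  rw [degIn, Finset.filter_image, Finset.card_image_of_injective _ hf, nbrIdx]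

theorem card_offIdx_add_card [NeZero N] (hf : Function.Injective f)
    (hS : S ⊆ Finset.univ.image f) : (offIdx S f).card + S.card = N := by
  have himage : (offIdx S f).image f = Finset.univ.image f \ S := by
    rw [← Finset.filter_notMem_eq_sdiff, Finset.filter_image, offIdx]
  rw [← Finset.card_image_of_injective _ hf, himage, Finset.card_sdiff_add_card_eq_card hS,
    Finset.card_image_of_injective _ hf, Finset.card_univ, ZMod.card]

theorem card_filter_add_one_mem_le (M O : Finset (ZMod N)) :
    (M.filter (· + 1 ∈ O)).card ≤ O.card :=
  Finset.card_le_card_of_injOn (· + 1) (fun _ hi => (Finset.mem_filter.1 hi).2)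
    (add_left_injective 1).injOn

theorem exists_add_one_notMem {M O : Finset (ZMod N)}
    (h : O.card < M.card) : ∃ i ∈ M, i + 1 ∉ O := by
  by_contra! hno
  have hle := card_filter_add_one_mem_le M O
  rw [Finset.filter_true_of_mem hno] at hle
  exact h.not_ge hle

theorem card_le_card_add_one {M O : Finset (ZMod N)}
    (h : (M.filter (· + 1 ∉ O)).card ≤ 1) : M.card ≤ O.card + 1 := by
  have hle := card_filter_add_one_mem_le M O
  have hsplit := M.card_filter_add_card_filter_not (· + 1 ∈ O)
  omega

theorem sub_one_mem_of_card_eq {M O : Finset (ZMod N)}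
    (h : (M.filter (· + 1 ∉ O)).card ≤ 1) (hM : M.card = O.card + 1) (ho : o ∈ O) :
    o - 1 ∈ M := by
  have hsplit := M.card_filter_add_card_filter_not (· + 1 ∈ O)
  have himage : (M.filter (· + 1 ∈ O)).image (· + 1) = O := by
    refine Finset.eq_of_subset_of_card_le (fun j hj => ?_) ?_
    · obtain ⟨i, hi, rfl⟩ := Finset.mem_image.1 hj
      exact (Finset.mem_filter.1 hi).2
    · rw [Finset.card_image_of_injective _ (add_left_injective 1)]
      omega
  rw [← himage] at ho
  obtain ⟨i, hi, rfl⟩ := Finset.mem_image.1 ho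
  simpa using (Finset.mem_filter.1 hi).1

/-- `f` is a longest cycle among those through `S`. It is shorter than `2 * K`, while the vertices
of `S` have at least `K` neighbours on it. -/
structure IsLongestThrough [NeZero N] (G : SimpleGraph V) (K : ℕ) (S : Finset V)
    (f : ZMod N → V) : Prop extends IsCycleMap G f where
  subset : S ⊆ Finset.univ.image f
  lt : N < 2 * K
  le_degIn : ∀ v ∈ S, K ≤ degIn G (Finset.univ.image f) v
  longest : ∀ T, HasCycleOn G T → S ⊆ T → T.card ≤ N

namespace IsLongestThrough

variable [NeZero N]

theorem neg (h : IsLongestThrough G K S f) : IsLongestThrough G K S fun i => f (-i) where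
  toIsCycleMap := h.toIsCycleMap.neg
  subset := (image_neg f).symm ▸ h.subset
  lt := h.lt
  le_degIn := (image_neg f).symm ▸ h.le_degIn
  longest := h.longest

theorem card_offIdx_add_card (h : IsLongestThrough G K S f) : (offIdx S f).card + S.card = N :=
  _root_.card_offIdx_add_card h.injective h.subset

theorem add_one_mem_offIdx_or (h : IsLongestThrough G K S f) (hii : i ≠ i')
    (hX : IsPathBetween G X x y) (hfX : ∀ j, f j ∉ X) (hi : i ∈ nbrIdx G f x)
    (hi' : i' ∈ nbrIdx G f y) : i + 1 ∈ offIdx S f ∨ i' + 1 ∈ offIdx S f := by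
  by_contra! hno
  simp only [mem_offIdx, not_not] at hno
  have hdeg := h.le_degIn _ hno.1
  have hdeg' := h.le_degIn _ hno.2
  have hlt := h.lt
  have hcyc := h.hasCycleOn_insert hii hX hfX (mem_nbrIdx.1 hi).symm (mem_nbrIdx.1 hi').symm
    (Or.inr (by omega))
  have hle := h.longest _ hcyc (h.subset.trans Finset.subset_union_left)
  rw [Finset.card_union_of_disjoint (disjoint_image_toFinset hfX), h.card_image,
    hX.card_toFinset] at hle
  have hpos := hX.length_pos
  omega

theorem card_filter_nbrIdx_le_one (h : IsLongestThrough G K S f) (hX : IsPathBetween G X x y)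
    (hfX : ∀ j, f j ∉ X) (hi' : i' ∈ nbrIdx G f y) (hO : i' + 1 ∉ offIdx S f) :
    ((nbrIdx G f x).filter (· + 1 ∉ offIdx S f)).card ≤ 1 := by
  refine Finset.card_le_one_iff_subset_singleton.2 ⟨i', fun i hi => Finset.mem_singleton.2 ?_⟩
  rw [Finset.mem_filter] at hi
  by_contra hne
  exact (h.add_one_mem_offIdx_or hne hX hfX hi.1 hi').elim hi.2 hO

theorem degIn_le (h : IsLongestThrough G K S f) (hx : x ∉ Finset.univ.image f) :
    degIn G (Finset.univ.image f) x ≤ (offIdx S f).card + 1 := by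
  rw [← card_nbrIdx h.injective]
  have hfx : ∀ j, f j ∉ [x] := fun j hj =>
    hx (List.mem_singleton.1 hj ▸ Finset.mem_image_of_mem f (Finset.mem_univ j))
  by_cases hex : ∃ i' ∈ nbrIdx G f x, i' + 1 ∉ offIdx S f
  · obtain ⟨i', hi', hO⟩ := hex
    exact card_le_card_add_one (h.card_filter_nbrIdx_le_one (.singleton x) hfx hi' hO)
  · exact not_lt.1 fun hlt => hex (exists_add_one_notMem (by omega))

theorem sub_one_mem_nbrIdx (h : IsLongestThrough G K S f) (hX : IsPathBetween G X x y)
    (hfX : ∀ j, f j ∉ X) (hx : degIn G (Finset.univ.image f) x = (offIdx S f).card + 1)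
    (hy : degIn G (Finset.univ.image f) y = (offIdx S f).card + 1) (ho : o ∈ offIdx S f) :
    o - 1 ∈ nbrIdx G f x := by
  rw [← card_nbrIdx h.injective] at hx hy
  obtain ⟨i', hi', hO⟩ := exists_add_one_notMem (Nat.lt_of_succ_le hy.ge)
  exact sub_one_mem_of_card_eq (h.card_filter_nbrIdx_le_one hX hfX hi' hO) hx ho

/-- The path `X` could otherwise replace a vertex of the cycle off `S`. -/
theorem length_le_one (h : IsLongestThrough G K S f) (hX : IsPathBetween G X x y)
    (hfX : ∀ j, f j ∉ X) (hx : degIn G (Finset.univ.image f) x = (offIdx S f).card + 1)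
    (hy : degIn G (Finset.univ.image f) y = (offIdx S f).card + 1)
    (hO : (offIdx S f).Nonempty) : X.length ≤ 1 := by
  obtain ⟨o, ho⟩ := hO
  have hcard : (offIdx S fun i => f (-i)).card = (offIdx S f).card := by
    have hO := h.card_offIdx_add_card
    have hO' := h.neg.card_offIdx_add_card
    omega
  have hox := h.sub_one_mem_nbrIdx hX hfX hx hy ho
  have hoy := h.neg.sub_one_mem_nbrIdx (o := -o) hX.reverse (by simpa using fun j => hfX (-j))
    (by rw [image_neg, hcard, hy]) (by rw [image_neg, hcard, hx])
    (by simpa [mem_offIdx] using ho)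
  have hcyc := h.hasCycleOn_replace hX hfX (mem_nbrIdx.1 hox).symm
    (by simpa [mem_nbrIdx, add_comm] using hoy)
  have hS : S ⊆ (Finset.univ.image f).erase (f o) :=
    Finset.subset_erase.2 ⟨h.subset, mem_offIdx.1 ho⟩
  have hle := h.longest _ hcyc (hS.trans Finset.subset_union_left)
  have hdisj := (disjoint_image_toFinset hfX).mono_left (Finset.erase_subset (f o) _)
  rw [Finset.card_union_of_disjoint hdisj, hX.card_toFinset, Finset.card_erase_of_mem
    (Finset.mem_image_of_mem f (Finset.mem_univ o)), h.card_image] at hle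
  omega

end IsLongestThrough

end CycleThrough

section CutConnectedness

variable {V : Type*} {G : SimpleGraph V} {A D W Y : Finset V}

theorem exists_rel_of_isChain_cons {α : Type*} {r : α → α → Prop} {s : Finset α} {d v : α}
    {l : List α} (h : (d :: l).IsChain r) (hd : d ∈ s) (hv : v ∈ l) (hvs : v ∉ s) :
    ∃ a ∈ s, ∃ w ∈ l, w ∉ s ∧ r a w := by
  induction l generalizing d with
  | nil => simp at hv
  | cons b l ih =>
    obtain ⟨hdb, hl⟩ := List.isChain_cons_cons.1 h
    by_cases hb : b ∈ s
    · have hvl : v ∈ l := (List.mem_cons.1 hv).resolve_left fun hvb => hvs (hvb ▸ hb)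
      obtain ⟨a, ha, w, hw, haw⟩ := ih hl hb hvl
      exact ⟨a, ha, w, List.mem_cons_of_mem _ hw, haw⟩
    · exact ⟨d, hd, b, List.mem_cons_self, hb, hdb⟩

/-- Every proper subset of `W` containing `D` sends an edge to the rest of `W`. In other words,
the subgraph induced by `W` becomes connected when `D` is contracted to a vertex. -/
def CutConnected (G : SimpleGraph V) (D W : Finset V) : Prop :=
  ∀ A : Finset V, D ⊆ A → A ⊂ W → ∃ a ∈ A, ∃ w ∈ W \ A, G.Adj a w

theorem CutConnected.exists_adj_sdiff (h : CutConnected G D W) (hYW : Y ⊆ W) (hDA : D ⊆ A)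
    (hA : A ⊂ W \ Y) (hY : ∀ y ∈ Y, ∀ w ∈ W, G.Adj y w → w ∈ A ∨ w ∈ Y) :
    ∃ a ∈ A, ∃ w ∈ (W \ Y) \ A, G.Adj a w := by
  obtain ⟨v, hv, hvA⟩ := Finset.exists_of_ssubset hA
  rw [Finset.mem_sdiff] at hv
  have hAY : A ∪ Y ⊂ W := by
    refine Finset.ssubset_iff_subset_ne.2
      ⟨Finset.union_subset (hA.subset.trans Finset.sdiff_subset) hYW, ?_⟩
    rintro rfl
    exact (Finset.mem_union.1 hv.1).elim hvA hv.2
  obtain ⟨a, ha, w, hw, haw⟩ := h (A ∪ Y) (hDA.trans Finset.subset_union_left) hAY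
  simp only [Finset.mem_sdiff, Finset.mem_union, not_or] at hw
  have haA : a ∈ A := (Finset.mem_union.1 ha).resolve_right fun haY =>
    (hY a haY w hw.1 haw).elim hw.2.1 hw.2.2
  exact ⟨a, haA, w, by simp [hw], haw⟩

theorem CutConnected.sdiff (h : CutConnected G D W) (hYW : Y ⊆ W)
    (hY : ∀ y ∈ Y, ∀ w ∈ W, G.Adj y w → w ∈ D ∨ w ∈ Y) : CutConnected G D (W \ Y) :=
  fun _ hDA hA => h.exists_adj_sdiff hYW hDA hA fun y hy w hw hyw =>
    (hY y hy w hw hyw).imp_left (hDA ·)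

theorem exists_adj_of_connected (hG : G.Connected) {w : V} (hA : A.Nonempty) (hw : w ∉ A) :
    ∃ a ∈ A, ∃ b ∉ A, G.Adj a b := by
  obtain ⟨a, ha⟩ := hA
  obtain ⟨p⟩ := hG.preconnected a w
  obtain ⟨d, -, hfst, hsnd⟩ := p.exists_boundary_dart A ha hw
  exact ⟨d.fst, hfst, d.snd, hsnd, d.adj⟩

theorem cutConnected_univ [Fintype V] (hG : G.Connected) (hD : D.Nonempty) :
    CutConnected G D Finset.univ := by
  intro A hDA hA
  obtain ⟨w, -, hw⟩ := Finset.exists_of_ssubset hA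
  obtain ⟨a, ha, b, hb, hab⟩ := exists_adj_of_connected hG (hD.mono hDA) hw
  exact ⟨a, ha, b, by simpa using hb, hab⟩

end CutConnectedness

section OutwardPaths

variable {V : Type*} {G : SimpleGraph V} {N : ℕ} {D W : Finset V} {l l₁ l₂ : List V}
  {a b w y : V}

/-- `l` is a path from `a` to `b` in `W \ D` whose first vertex has a neighbour in `D`. -/
structure IsOutward (G : SimpleGraph V) (D W : Finset V) (l : List V) (a b : V) : Prop
    extends IsPathBetween G l a b where
  subset : l.toFinset ⊆ W \ D
  exists_adj : ∃ d ∈ D, G.Adj d a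

namespace IsOutward

theorem mem_sdiff (h : IsOutward G D W l a b) (hw : w ∈ l) : w ∈ W \ D :=
  h.subset (List.mem_toFinset.2 hw)

theorem concat (h : IsOutward G D W l a b) (hw : w ∈ W) (hwD : w ∉ D) (hwl : w ∉ l)
    (hbw : G.Adj b w) : IsOutward G D W (l ++ [w]) a w where
  toIsPathBetween := h.toIsPathBetween.concat hwl hbw
  subset := by
    rw [List.toFinset_append, Finset.union_subset_iff]
    exact ⟨h.subset, by simp [hw, hwD]⟩
  exists_adj := h.exists_adj

theorem reverse (h : IsOutward G D W l a b) (hb : ∃ d ∈ D, G.Adj d b) :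
    IsOutward G D W l.reverse b a where
  toIsPathBetween := h.toIsPathBetween.reverse
  subset := by simpa only [List.toFinset_reverse] using h.subset
  exists_adj := hb

theorem exists_rotate (h : IsOutward G D W (l₁ ++ y :: l₂) a b) (hb : ∃ d ∈ D, G.Adj d b)
    (hadj : ∀ v ∈ l₁ ++ y :: l₂, v ≠ b → G.Adj b v) :
    ∃ c, IsOutward G D W (l₁ ++ (y :: l₂).reverse) c y := by
  rcases List.eq_nil_or_concat l₁ with rfl | ⟨l, u, rfl⟩
  · obtain rfl : y = a := by simpa using h.head
    exact ⟨b, h.reverse hb⟩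
  · rw [List.concat_eq_append] at h hadj ⊢
    have hu : (l ++ [u]).getLast? = some u := by simp
    have hleft := h.left_of_append hu
    have hright := h.right_of_append (l₂ := y :: l₂) rfl
    have hdisj := h.disjoint_of_append
    have hub : u ≠ b := fun hub => hdisj hleft.getLast_mem (hub ▸ hright.getLast_mem)
    refine ⟨a, hleft.append hright.reverse (hadj u (by simp) hub).symm ?_, ?_, h.exists_adj⟩
    · exact fun v hv hv' => hdisj hv (List.mem_reverse.1 hv')
    · simpa only [List.toFinset_append, List.toFinset_reverse] using h.subset

theorem notMem [NeZero N] {f : ZMod N → V} (h : IsOutward G (Finset.univ.image f) W l a b)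
    (j : ZMod N) : f j ∉ l := fun hj =>
  (Finset.mem_sdiff.1 (h.mem_sdiff hj)).2 (Finset.mem_image_of_mem f (Finset.mem_univ j))

theorem add_length_le [NeZero N] {f : ZMod N → V} (h : IsOutward G (Finset.univ.image f) W l a b)
    (hf : IsCycleMap G f) {B : ℕ} (hP : ∀ l a b, IsPathBetween G l a b → l.length ≤ B) :
    N + l.length ≤ B := by
  obtain ⟨d, hd, hda⟩ := h.exists_adj
  obtain ⟨i, -, rfl⟩ := Finset.mem_image.1 hd
  have harc := hf.isPathBetween_arc (i := i + 1) (j := i) (NeZero.pos N) le_rfl (by simp)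
  have hle := hP _ _ _ (harc.append h.toIsPathBetween hda fun v hv hvl => by
    obtain ⟨k, -, rfl⟩ := mem_arc.1 hv
    exact h.notMem _ hvl)
  simpa [length_arc] using hle

end IsOutward

/-- `l` has the greatest number of vertices among the outward paths from `D` into `W`. -/
structure IsLongestOutward (G : SimpleGraph V) (D W : Finset V) (l : List V) (a b : V) : Prop
    extends IsOutward G D W l a b where
  longest : ∀ {l' : List V} {a' b' : V}, IsOutward G D W l' a' b' → l'.length ≤ l.length

theorem exists_isLongestOutward (hDW : D ⊂ W) (hW : CutConnected G D W) :
    ∃ l a b, IsLongestOutward G D W l a b := by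
  obtain ⟨d, hd, w, hw, hdw⟩ := hW D subset_rfl hDW
  obtain ⟨l, ⟨a, b, hl⟩, hmax⟩ := exists_forall_length_le (B := (W \ D).card)
    (P := fun l => ∃ a b, IsOutward G D W l a b)
    ⟨[w], w, w, .singleton w, by simpa using hw, d, hd, hdw⟩ <| by
      rintro l ⟨a, b, hl⟩
      exact hl.card_toFinset ▸ Finset.card_le_card hl.subset
  exact ⟨l, a, b, hl, fun hl' => hmax _ ⟨_, _, hl'⟩⟩

namespace IsLongestOutward

theorem of_length_eq (h : IsLongestOutward G D W l a b) {l' : List V} {a' b' : V}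
    (hl' : IsOutward G D W l' a' b') (hlen : l'.length = l.length) :
    IsLongestOutward G D W l' a' b' :=
  ⟨hl', fun hl'' => hlen ▸ h.longest hl''⟩

theorem mem_or_mem_of_adj (h : IsLongestOutward G D W l a b) (hw : w ∈ W) (hbw : G.Adj b w) :
    w ∈ D ∨ w ∈ l := by
  by_contra! hno
  have hle := h.longest (h.concat hw hno.1 hno.2 hbw)
  simp at hle

theorem degIn_le (h : IsLongestOutward G D W l a b) :
    degIn G W b ≤ degIn G D b + degIn G l.toFinset b := by
  have hdisj : Disjoint D l.toFinset :=
    (Finset.disjoint_sdiff (s := D) (t := W)).mono_right h.subset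
  rw [← degIn_union hdisj]
  refine Finset.card_le_card fun w hw => ?_
  rw [Finset.mem_filter] at hw ⊢
  rw [Finset.mem_union, List.mem_toFinset]
  exact ⟨h.mem_or_mem_of_adj hw.1 hw.2, hw.2⟩

theorem cutConnected_sdiff_singleton (h : IsLongestOutward G D W l a b)
    (hW : CutConnected G D W) : CutConnected G D (W \ {b}) := by
  intro A hDA hA
  have hb := (Finset.mem_sdiff.1 (h.mem_sdiff h.getLast_mem)).1
  have hsplit : l.dropLast ++ [b] = l := List.dropLast_append_getLast? b h.getLast
  have hbl : b ∉ l.dropLast := by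
    exact List.disjoint_singleton.1 (List.disjoint_of_nodup_append (hsplit.symm ▸ h.nodup))
  by_cases hpA : ∀ v ∈ l.dropLast, v ∈ A
  · refine hW.exists_adj_sdiff (by simpa using hb) hDA hA fun y hy w hw hyw => ?_
    rw [Finset.mem_singleton] at hy ⊢
    subst hy
    refine (h.mem_or_mem_of_adj hw hyw).elim (fun hwD => .inl (hDA hwD)) fun hwl => ?_
    rw [← hsplit, List.mem_append, List.mem_singleton] at hwl
    exact hwl.imp_left (hpA w)
  · push Not at hpA
    obtain ⟨v, hv, hvA⟩ := hpA
    obtain ⟨d, hd, hda⟩ := h.exists_adj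
    have hchain : (d :: l).IsChain G.Adj := List.isChain_cons.2 ⟨by simpa [h.head], h.isChain⟩
    rw [← hsplit, ← List.cons_append] at hchain
    obtain ⟨c, hc, w, hw, hwA, hcw⟩ :=
      exists_rel_of_isChain_cons hchain.left_of_append (hDA hd) hv hvA
    have hwW := (Finset.mem_sdiff.1 (h.mem_sdiff (List.mem_of_mem_dropLast hw))).1
    have hwb : w ≠ b := fun hwb => hbl (hwb ▸ hw)
    exact ⟨c, hc, w, by simp [hwW, hwb, hwA], hcw⟩

theorem mem_or_mem_of_adj_of_mem (h : IsLongestOutward G D W l a b) (hb : ∃ d ∈ D, G.Adj d b)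
    (hadj : ∀ v ∈ l, v ≠ b → G.Adj b v) (hy : y ∈ l) (hw : w ∈ W) (hyw : G.Adj y w) :
    w ∈ D ∨ w ∈ l := by
  obtain ⟨l₁, l₂, rfl⟩ := List.append_of_mem hy
  obtain ⟨c, hc⟩ := h.exists_rotate hb hadj
  refine ((h.of_length_eq hc (by simp)).mem_or_mem_of_adj hw hyw).imp_right fun hwl => ?_
  simpa [or_comm, or_left_comm] using hwl

end IsLongestOutward

end OutwardPaths

section Peeling

variable {V : Type*} {G : SimpleGraph V} {K N σ : ℕ} {D S T W X : Finset V} {l : List V} {a b v : V}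

theorem adj_of_card_le_degIn_add_one (h : T.card ≤ degIn G T b + 1) (hb : b ∈ T) (hv : v ∈ T)
    (hvb : v ≠ b) : G.Adj b v := by
  have hsub : T.filter (G.Adj b) ⊆ T.erase b := fun w hw => by
    rw [Finset.mem_filter] at hw
    exact Finset.mem_erase.2 ⟨hw.2.ne', hw.1⟩
  have heq := Finset.eq_of_subset_of_card_le hsub <| by
    rw [Finset.card_erase_of_mem hb]
    exact Nat.sub_le_of_le_add h
  exact (Finset.mem_filter.1 (heq.symm ▸ Finset.mem_erase.2 ⟨hvb, hv⟩)).2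

theorem degSum_le_of_mem_or_mem (hXW : X ⊆ W)
    (hadj : ∀ x ∈ X, ∀ w ∈ W, G.Adj x w → w ∈ D ∨ w ∈ X) (hD : ∀ x ∈ X, degIn G D x ≤ 1) :
    degSum G W ≤ degSum G (W \ X) + X.card * (X.card + 1) := by
  have hsdiff : ∀ x ∈ X, degIn G (W \ X) x ≤ 1 := fun x hx => by
    refine le_trans (Finset.card_le_card fun w hw => ?_) (hD x hx)
    simp only [Finset.mem_filter, Finset.mem_sdiff] at hw ⊢
    exact ⟨(hadj x hx w hw.1.1 hw.2).resolve_right hw.1.2, hw.2⟩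
  have hsum := Finset.sum_le_card_nsmul X _ 1 hsdiff
  have hX := degSum_le_card_mul (G := G) X
  rw [degSum_eq_degSum_sdiff_add hXW]
  rw [smul_eq_mul, mul_one] at hsum
  rcases Nat.eq_zero_or_pos X.card with h₀ | hpos
  · simp_all
  · obtain ⟨m, hm⟩ := Nat.exists_eq_succ_of_ne_zero hpos.ne'
    rw [hm] at hX hsum ⊢
    rw [Nat.succ_sub_one] at hX
    nlinarith

variable [NeZero N] {f : ZMod N → V}

theorem IsLongestThrough.extremal (h : IsLongestThrough G K S f)
    (hl : IsLongestOutward G (Finset.univ.image f) W l a b)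
    (hP : ∀ l a b, IsPathBetween G l a b → l.length ≤ 2 * K + 1) (hσ : 2 * K ≤ S.card + σ)
    (hdeg : σ < degIn G W b) :
    N + l.length = 2 * K + 1 ∧ S.card + σ = 2 * K ∧
      degIn G (Finset.univ.image f) b = (offIdx S f).card + 1 ∧
      ∀ v ∈ l, v ≠ b → G.Adj b v := by
  have hbl := List.mem_toFinset.2 hl.getLast_mem
  have hW := hl.degIn_le
  have hlt := degIn_lt_card (G := G) hbl
  have hcard := hl.card_toFinset
  have hlen := hl.add_length_le h.toIsCycleMap hP
  have hD := h.degIn_le (Finset.mem_sdiff.1 (hl.subset hbl)).2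
  have hO := h.card_offIdx_add_card
  exact ⟨by omega, by omega, by omega, fun v hv hvb =>
    adj_of_card_le_degIn_add_one (by omega) hbl (List.mem_toFinset.2 hv) hvb⟩

theorem IsLongestThrough.peel_of_forall_lt_degIn (h : IsLongestThrough G K S f)
    (hP : ∀ l a b, IsPathBetween G l a b → l.length ≤ 2 * K + 1) (hσ : 2 * K ≤ S.card + σ)
    (hσ₂ : 2 ≤ σ) (hW : CutConnected G (Finset.univ.image f) W)
    (hl : IsLongestOutward G (Finset.univ.image f) W l a b)
    (hdeg : ∀ l a b, IsLongestOutward G (Finset.univ.image f) W l a b → σ < degIn G W b) :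
    CutConnected G (Finset.univ.image f) (W \ l.toFinset) ∧
      degSum G W ≤ degSum G (W \ l.toFinset) + 2 * σ * l.toFinset.card := by
  obtain ⟨hlen, hS, hb, hadj⟩ := h.extremal hl hP hσ (hdeg l a b hl)
  obtain ⟨d, hd⟩ : ((Finset.univ.image f).filter (G.Adj b)).Nonempty :=
    Finset.card_pos.1 (hb.symm ▸ Nat.succ_pos _ : 0 < degIn G (Finset.univ.image f) b)
  have hdb : ∃ d ∈ Finset.univ.image f, G.Adj d b :=
    ⟨d, (Finset.mem_filter.1 hd).1, (Finset.mem_filter.1 hd).2.symm⟩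
  have hr := hl.of_length_eq (hl.reverse hdb) List.length_reverse
  have ha := (h.extremal hr hP hσ (hdeg _ _ _ hr)).2.2.1
  have hO : offIdx S f = ∅ := Finset.not_nonempty_iff_eq_empty.1 fun hO => by
    have hle := h.length_le_one hl.toIsPathBetween hl.notMem ha hb hO
    have hlt := h.lt
    omega
  have hN := h.card_offIdx_add_card
  rw [hO, Finset.card_empty] at hN
  have hlW : l.toFinset ⊆ W := hl.subset.trans Finset.sdiff_subset
  have hnbr : ∀ y ∈ l.toFinset, ∀ w ∈ W, G.Adj y w → w ∈ Finset.univ.image f ∨ w ∈ l.toFinset :=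
    fun y hy w hw hyw => (hl.mem_or_mem_of_adj_of_mem hdb hadj (List.mem_toFinset.1 hy) hw
      hyw).imp_right List.mem_toFinset.2
  have hle := degSum_le_of_mem_or_mem hlW hnbr fun y hy => by
    simpa [hO] using h.degIn_le (Finset.mem_sdiff.1 (hl.subset hy)).2
  have hcard : l.toFinset.card = σ + 1 := by
    rw [hl.card_toFinset]
    omega
  refine ⟨hW.sdiff hlW hnbr, hle.trans ?_⟩
  rw [hcard]
  nlinarith

theorem IsLongestThrough.exists_peel (h : IsLongestThrough G K S f)
    (hP : ∀ l a b, IsPathBetween G l a b → l.length ≤ 2 * K + 1) (hσ : 2 * K ≤ S.card + σ)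
    (hσ₂ : 2 ≤ σ) (hDW : Finset.univ.image f ⊂ W) (hW : CutConnected G (Finset.univ.image f) W) :
    ∃ X ⊆ W \ Finset.univ.image f, X.Nonempty ∧ CutConnected G (Finset.univ.image f) (W \ X) ∧
      degSum G W ≤ degSum G (W \ X) + 2 * σ * X.card := by
  by_cases hsmall : ∃ l a b, IsLongestOutward G (Finset.univ.image f) W l a b ∧ degIn G W b ≤ σ
  · obtain ⟨l, a, b, hl, hdeg⟩ := hsmall
    have hb := hl.mem_sdiff hl.getLast_mem
    refine ⟨{b}, by simpa using hb, Finset.singleton_nonempty b,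
      hl.cutConnected_sdiff_singleton hW, ?_⟩
    rw [degSum_eq_degSum_erase_add (Finset.mem_sdiff.1 hb).1, Finset.sdiff_singleton_eq_erase,
      Finset.card_singleton]
    omega
  · push Not at hsmall
    obtain ⟨l, a, b, hl⟩ := exists_isLongestOutward hDW hW
    exact ⟨_, hl.subset, ⟨a, List.mem_toFinset.2 hl.head_mem⟩,
      h.peel_of_forall_lt_degIn hP hσ hσ₂ hW hl hsmall⟩

theorem IsLongestThrough.degSum_add_le (h : IsLongestThrough G K S f)
    (hP : ∀ l a b, IsPathBetween G l a b → l.length ≤ 2 * K + 1) (hσ : 2 * K ≤ S.card + σ)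
    (hσ₂ : 2 ≤ σ) (hDW : Finset.univ.image f ⊆ W) (hW : CutConnected G (Finset.univ.image f) W) :
    degSum G W + 2 * σ * N ≤ degSum G (Finset.univ.image f) + 2 * σ * W.card := by
  induction W using Finset.strongInduction with
  | H W ih =>
    rcases hDW.eq_or_ssubset with rfl | hDW
    · rw [h.card_image]
    obtain ⟨X, hX, hX₀, hWX, hle⟩ := h.exists_peel hP hσ hσ₂ hDW hW
    have hXW := hX.trans Finset.sdiff_subset
    have hDX : Finset.univ.image f ⊆ W \ X :=
      Finset.subset_sdiff.2 ⟨hDW.subset, (Finset.subset_sdiff.1 hX).2.symm⟩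
    have hrec := ih _ (Finset.sdiff_ssubset hXW hX₀) hDX hWX
    rw [← Finset.card_sdiff_add_card_eq_card hXW, mul_add]
    omega

end Peeling

section NoLongCycle

variable {V : Type*} {G : SimpleGraph V} {K : ℕ} {S : Finset V}

theorem le_or_le_of_card_add_eq {K N c e n s : ℕ} (hs : 2 ≤ s) (hcs : c + s = 2 * K)
    (hc : K + 2 ≤ c) (hN : N < 2 * K) (hn : 2 * K ≤ n)
    (h : e + 2 * s * N + 2 * (K - 1) * c ≤ c * (c - 1) + 2 * (K - 1) * N + 2 * s * n) :
    e ≤ 2 * K * (2 * K - 1) + 2 * (n - 2 * K) ∨ e ≤ K * (K + 1) + 2 * (K - 1) * (n - K - 1) := by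
  obtain ⟨j, rfl⟩ := Nat.exists_eq_add_of_le (show s + 2 ≤ K by omega)
  obtain rfl : c = s + 4 + 2 * j := by omega
  obtain ⟨x, rfl⟩ := Nat.exists_eq_add_of_le hn
  obtain ⟨t, ht⟩ := Nat.exists_eq_add_of_lt hN
  rw [show s + 2 + j - 1 = s + 1 + j by omega] at h ⊢
  rw [show s + 4 + 2 * j - 1 = s + 3 + 2 * j by omega] at h
  rw [show 2 * (s + 2 + j) - 1 = 2 * s + 3 + 2 * j by omega,
    show 2 * (s + 2 + j) + x - (s + 2 + j) - 1 = s + 1 + j + x by omega, Nat.add_sub_cancel_left]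
  rcases le_or_gt (j + 2) (2 * x) with hx | hx
  · right
    have hjx := Nat.mul_le_mul_left (j + 1) hx
    nlinarith
  · left
    nlinarith

theorem le_or_le_of_card_add_one_eq {K N c e n : ℕ} (hK : 4 ≤ K) (hc : c + 1 = 2 * K)
    (hcN : c ≤ N) (hN : N < 2 * K) (hn : 2 * K ≤ n)
    (h : e + 2 * 2 * N + 2 * (K - 1) * c ≤ c * (c - 1) + 2 * (K - 1) * N + 2 * 2 * n) :
    e ≤ 2 * K * (2 * K - 1) + 2 * (n - 2 * K) ∨ e ≤ K * (K + 1) + 2 * (K - 1) * (n - K - 1) := by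
  obtain rfl : c = N := by omega
  obtain ⟨j, rfl⟩ := Nat.exists_eq_add_of_le hK
  obtain rfl : c = 7 + 2 * j := by omega
  obtain ⟨x, rfl⟩ := Nat.exists_eq_add_of_le hn
  rw [show 7 + 2 * j - 1 = 6 + 2 * j by omega] at h
  rw [show 4 + j - 1 = 3 + j by omega, show 2 * (4 + j) - 1 = 7 + 2 * j by omega,
    show 2 * (4 + j) + x - (4 + j) - 1 = 3 + j + x by omega, Nat.add_sub_cancel_left]
  rcases le_or_gt x (2 * j + 5) with hx | hx
  · left
    nlinarith
  · right
    nlinarith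

theorem exists_isLongestThrough (hS : HasCycleOn G S)
    (hC : ∀ T, HasCycleOn G T → T.card < 2 * K) (hdeg : ∀ v ∈ S, K ≤ degIn G S v) :
    ∃ (N : ℕ) (_ : NeZero N) (f : ZMod N → V), IsLongestThrough G K S f := by
  have hbdd : BddAbove (Finset.card '' {T | HasCycleOn G T ∧ S ⊆ T}) :=
    ⟨2 * K, Set.forall_mem_image.2 fun T hT => (hC T hT.1).le⟩
  obtain ⟨D, hD, hmax⟩ := Nat.sSup_mem
    ⟨S.card, Set.mem_image_of_mem _ (show HasCycleOn G S ∧ S ⊆ S from ⟨hS, subset_rfl⟩)⟩ hbdd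
  obtain ⟨l, a, b, hl, -, rfl⟩ := hD.1
  have hN : NeZero l.toFinset.card :=
    ⟨Finset.card_ne_zero_of_mem (List.mem_toFinset.2 hl.head_mem)⟩
  obtain ⟨f, hf, hfD⟩ := hD.1.exists_isCycleMap rfl
  exact ⟨_, hN, f, hf, hfD.symm ▸ hD.2, hC _ hD.1,
    fun v hv => (hdeg v hv).trans (degIn_mono (hfD.symm ▸ hD.2) v),
    fun T hT hST => hmax ▸ le_csSup hbdd (Set.mem_image_of_mem _ ⟨hT, hST⟩)⟩

theorem IsDensest.degSum_univ_add_le [Fintype V] {N σ : ℕ} [NeZero N] {f : ZMod N → V}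
    (h : IsDensest G (2 * (K - 1)) (K + 1) S) (hf : IsLongestThrough G K S f) (hG : G.Connected)
    (hP : ∀ l a b, IsPathBetween G l a b → l.length ≤ 2 * K + 1) (hσ : 2 * K ≤ S.card + σ)
    (hσ₂ : 2 ≤ σ) :
    degSum G Finset.univ + 2 * σ * N + 2 * (K - 1) * S.card ≤
      S.card * (S.card - 1) + 2 * (K - 1) * N + 2 * σ * Fintype.card V := by
  have hD : (Finset.univ.image f).Nonempty := Finset.univ_nonempty.image f
  have hpeel := hf.degSum_add_le hP hσ hσ₂ (Finset.subset_univ _) (cutConnected_univ hG hD)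
  have hdense := h.degSum_add_le (Finset.univ.image f) <|
    h.le_card.trans (Finset.card_le_card hf.subset)
  have hS := degSum_le_card_mul (G := G) S
  rw [hf.card_image] at hdense
  rw [Finset.card_univ] at hpeel
  omega

theorem degSum_univ_le_of_no_long_cycle [Fintype V] (hK : 4 ≤ K) (hn : 2 * K ≤ Fintype.card V)
    (hG : G.Connected) (hP : ∀ l a b, IsPathBetween G l a b → l.length ≤ 2 * K + 1)
    (hC : ∀ T, HasCycleOn G T → T.card < 2 * K) :
    degSum G Finset.univ ≤ 2 * K * (2 * K - 1) + 2 * (Fintype.card V - 2 * K) ∨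
      degSum G Finset.univ ≤ K * (K + 1) + 2 * (K - 1) * (Fintype.card V - K - 1) := by
  obtain ⟨S, hS⟩ := exists_isDensest G (2 * (K - 1)) (show K + 1 ≤ Fintype.card V by omega)
  rcases hS.le_card.eq_or_lt with hSK | hSK
  · right
    have hle := hS.degSum_add_le Finset.univ (by rw [Finset.card_univ]; omega)
    have hdeg := degSum_le_card_mul (G := G) S
    rw [← hSK, Nat.add_sub_cancel] at hdeg
    rw [← hSK, Finset.card_univ] at hle
    rw [Nat.sub_sub, Nat.mul_sub, mul_comm K]
    omega
  have hdeg : ∀ v ∈ S, K ≤ degIn G S v := fun v hv => by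
    have hlt := hS.lt_two_mul_degIn hSK hv
    omega
  obtain ⟨N, _, f, hf⟩ :=
    exists_isLongestThrough (hS.hasCycleOn (by omega) hSK hP hC) hC hdeg
  have hSN : S.card ≤ N := hf.card_image ▸ Finset.card_le_card hf.subset
  have hN := hf.lt
  rcases eq_or_ne (S.card + 1) (2 * K) with hS₁ | hS₁
  · exact le_or_le_of_card_add_one_eq hK hS₁ hSN hN hn <|
      hS.degSum_univ_add_le hf hG hP (by omega) le_rfl
  · exact le_or_le_of_card_add_eq (s := 2 * K - S.card) (by omega) (by omega) hSK hN hn <|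
      hS.degSum_univ_add_le hf hG hP (by omega) (by omega)

end NoLongCycle

section CyclicSets

variable {N : ℕ} {A B : Finset (ZMod N)} {i : ZMod N} {q : ℕ}

/-- The elements of `A` at which a run of `A` in steps of two ends. -/
noncomputable def runEnds (A : Finset (ZMod N)) : Finset (ZMod N) := A.filter fun i => i + 2 ∉ A

/-- The elements of `A` at which a run of `A` in steps of two starts. -/
noncomputable def runStarts (A : Finset (ZMod N)) : Finset (ZMod N) := A.filter fun i => i - 2 ∉ A

/-- The elements lying neither in `A` nor in its translate `A + 1`. -/
noncomputable def gaps [NeZero N] (A : Finset (ZMod N)) : Finset (ZMod N) :=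
  Finset.univ.filter fun i => i ∉ A ∧ i - 1 ∉ A

theorem card_gaps_add [NeZero N] (hA : ∀ i ∈ A, i + 1 ∉ A) : (gaps A).card + 2 * A.card = N := by
  have hgaps : gaps A = (A ∪ A.image (· + 1))ᶜ := by
    ext i
    simp [gaps, sub_eq_add_neg]
  have hdisj : Disjoint A (A.image (· + 1)) := by
    simpa [Finset.disjoint_left, ← sub_eq_add_neg] using
      fun i hi hi' => hA _ hi' (by simpa using hi)
  have hunion := Finset.card_union_of_disjoint hdisj
  rw [Finset.card_image_of_injective _ (add_left_injective 1)] at hunion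
  have hcompl := Finset.card_compl_add_card (A ∪ A.image (· + 1))
  rw [ZMod.card, ← hgaps] at hcompl
  omega

theorem card_runStarts (A : Finset (ZMod N)) : (runStarts A).card = (runEnds A).card := by
  have hadd := Finset.card_filter_add_card_filter_not (s := A) (fun i => i + 2 ∈ A)
  have hsub := Finset.card_filter_add_card_filter_not (s := A) (fun i => i - 2 ∈ A)
  have himage : (A.filter fun i => i - 2 ∈ A) = (A.filter fun i => i + 2 ∈ A).image (· + 2) := by
    ext i
    simp [sub_eq_add_neg, and_comm]
  rw [himage, Finset.card_image_of_injective _ (add_left_injective 2)] at hsub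
  unfold runStarts runEnds
  omega

theorem image_sub_one_runStarts_subset_gaps [NeZero N] (hA : ∀ i ∈ A, i + 1 ∉ A) :
    (runStarts A).image (· - 1) ⊆ gaps A := by
  intro i hi
  obtain ⟨j, hj, rfl⟩ := Finset.mem_image.1 hi
  rw [runStarts, Finset.mem_filter] at hj
  rw [gaps, Finset.mem_filter, sub_sub, one_add_one_eq_two]
  exact ⟨Finset.mem_univ _, fun h => hA _ h (by simpa using hj.1), hj.2⟩

theorem card_gaps_sdiff_add [NeZero N] (hA : ∀ i ∈ A, i + 1 ∉ A) :
    (gaps A \ (runStarts A).image (· - 1)).card + (runEnds A).card = (gaps A).card := by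
  rw [← Finset.card_sdiff_add_card_eq_card (image_sub_one_runStarts_subset_gaps hA),
    Finset.card_image_of_injective _ sub_left_injective, card_runStarts]

theorem card_runEnds_add_le [NeZero N] (hA : ∀ i ∈ A, i + 1 ∉ A) :
    (runEnds A).card + 2 * A.card ≤ N := by
  have hgaps := card_gaps_add hA
  have hsdiff := card_gaps_sdiff_add hA
  omega

theorem card_filter_add_notMem_le (A : Finset (ZMod N)) (q : ℕ) :
    (A.filter fun i : ZMod N => i + 2 * q ∉ A).card ≤ q * (runEnds A).card := by
  induction q with
  | zero => simp
  | succ q ih =>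
    have hsub : (A.filter fun i : ZMod N => i + 2 * (q + 1 : ℕ) ∉ A) ⊆
        (A.filter fun i : ZMod N => i + 2 * q ∉ A) ∪ (runEnds A).image (· - 2 * (q : ZMod N)) := by
      intro i hi
      rw [Finset.mem_filter] at hi
      rw [Finset.mem_union, Finset.mem_filter, Finset.mem_image]
      by_cases h : i + 2 * q ∈ A
      · refine Or.inr ⟨_, Finset.mem_filter.2 ⟨h, ?_⟩, add_sub_cancel_right _ _⟩
        rw [add_assoc, ← mul_add_one, ← Nat.cast_succ]
        exact hi.2
      · exact Or.inl ⟨hi.1, h⟩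
    have hunion := (Finset.card_le_card hsub).trans (Finset.card_union_le _ _)
    have himage := Finset.card_image_le (s := runEnds A) (f := (· - 2 * (q : ZMod N)))
    rw [add_mul, one_mul]
    omega

theorem card_add_card_runEnds_le [NeZero N] (hA : ∀ i ∈ A, i + 1 ∉ A) (hAB : ∀ i ∈ A, i + 1 ∉ B)
    (hBA : ∀ i ∈ B, i + 1 ∉ A) (hq : ∀ i ∈ B, i + 2 * q ∉ A) :
    B.card + (runEnds A).card ≤ q * (runEnds A).card + (gaps A).card := by
  have hsub : B ⊆ (A.filter fun i : ZMod N => i + 2 * q ∉ A) ∪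
      (gaps A \ (runStarts A).image (· - 1)) := by
    intro i hi
    rw [Finset.mem_union, Finset.mem_filter, Finset.mem_sdiff]
    by_cases h : i ∈ A
    · exact Or.inl ⟨h, hq i hi⟩
    · refine Or.inr ⟨Finset.mem_filter.2 ⟨Finset.mem_univ _, h, fun h' => hAB _ h' ?_⟩,
        fun h' => ?_⟩
      · simpa using hi
      · obtain ⟨j, hj, rfl⟩ := Finset.mem_image.1 h'
        exact hBA _ hi (by simpa using (Finset.mem_filter.1 hj).1)
  have hunion := (Finset.card_le_card hsub).trans (Finset.card_union_le _ _)
  have hfilter := card_filter_add_notMem_le A q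
  have hgaps := card_gaps_sdiff_add hA
  omega

end CyclicSets

theorem sum_le_card_mul_of_pairwise_add_le {ι : Type*} {S : Finset ι} {g : ι → ℕ} {K : ℕ}
    (hS : 2 ≤ S.card) (h : ∀ i ∈ S, ∀ j ∈ S, i ≠ j → g i + g j ≤ 2 * K) :
    ∑ i ∈ S, g i ≤ S.card * K := by
  by_cases hall : ∀ i ∈ S, g i ≤ K
  · simpa using Finset.sum_le_card_nsmul S g K hall
  push Not at hall
  obtain ⟨a, ha, hKa⟩ := hall
  obtain ⟨b, hb, hba⟩ := Finset.exists_mem_ne hS a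
  have hsmall : ∀ i ∈ S.erase a, g i + g a ≤ 2 * K := fun i hi =>
    h i (Finset.mem_of_mem_erase hi) a ha (Finset.ne_of_mem_erase hi)
  have hbK : ∀ i ∈ (S.erase a).erase b, g i ≤ K := fun i hi => by
    have := hsmall i (Finset.mem_of_mem_erase hi)
    omega
  have hb' : b ∈ S.erase a := Finset.mem_erase.2 ⟨hba, hb⟩
  have hrest : ∑ i ∈ (S.erase a).erase b, g i ≤ _ := Finset.sum_le_card_nsmul _ g K hbK
  have hab := h a ha b hb hba.symm
  obtain ⟨c, hc⟩ := Nat.exists_eq_add_of_le hS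
  rw [Finset.card_erase_of_mem hb', Finset.card_erase_of_mem ha, smul_eq_mul, hc,
    show 2 + c - 1 - 1 = c by omega] at hrest
  rw [← Finset.add_sum_erase S g ha, ← Finset.add_sum_erase _ g hb', hc, add_mul]
  omega

theorem add_mul_add_sub_one (a b : ℕ) :
    (a + b) * (a + b - 1) = a * (a - 1) + b * (b - 1) + 2 * (b * a) := by
  rcases a with _ | a
  · simp
  rcases b with _ | b
  · simp
  rw [← add_assoc, Nat.add_sub_cancel, Nat.add_sub_cancel, Nat.add_sub_cancel]
  ring

section IndependentSets

variable {V : Type*} {G : SimpleGraph V} {I W : Finset V} {v : V}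

theorem degIn_eq_zero_of_isIndepSet (h : G.IsIndepSet I) (hv : v ∈ I) : degIn G I v = 0 :=
  degIn_eq_zero fun _ hw hvw => h hv hw hvw.ne hvw

theorem degSum_eq_zero_of_isIndepSet (h : G.IsIndepSet I) : degSum G I = 0 :=
  Finset.sum_eq_zero fun _ => degIn_eq_zero_of_isIndepSet h

theorem degIn_sdiff_of_isIndepSet (hIW : I ⊆ W) (h : G.IsIndepSet I) (hv : v ∈ I) :
    degIn G (W \ I) v = degIn G W v := by
  rw [← degIn_sdiff_add_degIn hIW v, degIn_eq_zero_of_isIndepSet h hv, add_zero]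

theorem degIn_add_card_le_of_isIndepSet (hIW : I ⊆ W) (h : G.IsIndepSet I) (hv : v ∈ I) :
    degIn G W v + I.card ≤ W.card := by
  rw [← degIn_sdiff_of_isIndepSet hIW h hv, ← Finset.card_sdiff_add_card_eq_card hIW]
  exact Nat.add_le_add_right (Finset.card_filter_le _ _) _

theorem degSum_eq_of_isIndepSet (hIW : I ⊆ W) (h : G.IsIndepSet I) :
    degSum G W = degSum G (W \ I) + 2 * ∑ v ∈ I, degIn G W v := by
  rw [degSum_eq_degSum_sdiff_add hIW, degSum_eq_zero_of_isIndepSet h, add_zero,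
    Finset.sum_congr rfl fun v hv => degIn_sdiff_of_isIndepSet hIW h hv]

theorem degSum_add_le_of_isIndepSet (hIW : I ⊆ W) (h : G.IsIndepSet I) :
    degSum G W + I.card * (I.card - 1) ≤ W.card * (W.card - 1) := by
  have hdegSum := degSum_eq_of_isIndepSet hIW h
  have hsdiff := degSum_le_card_mul (G := G) (W \ I)
  have hsum : ∑ v ∈ I, degIn G W v ≤ _ := Finset.sum_le_card_nsmul I _ (W \ I).card fun v hv =>
    (degIn_sdiff_of_isIndepSet hIW h hv).ge.trans (Finset.card_filter_le _ _)
  rw [smul_eq_mul] at hsum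
  rw [← Finset.card_sdiff_add_card_eq_card hIW, add_mul_add_sub_one]
  omega

end IndependentSets

section TopCycles

variable {V : Type*} {G : SimpleGraph V} {T : Finset V} {N q : ℕ} {f : ZMod N → V} {z w : V}
  {i i' : ZMod N}

theorem HasCycleOn.exists_length_eq_card_add_one (h : HasCycleOn G T) (hG : G.Connected)
    (hw : w ∉ T) : ∃ l a b, IsPathBetween G l a b ∧ l.length = T.card + 1 := by
  have hT := h
  obtain ⟨l, a, b, hl, -, rfl⟩ := hT
  obtain ⟨v, hv, u, hu, hvu⟩ := exists_adj_of_connected hG ⟨a, List.mem_toFinset.2 hl.head_mem⟩ hw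
  obtain ⟨l', b', hl', hl'T⟩ := h.exists_isPathBetween_insert hv hu hvu
  exact ⟨l', u, b', hl', by rw [← hl'.card_toFinset, hl'T, Finset.card_insert_of_notMem hu]⟩

theorem notMem_arc (hz : ∀ i, f i ≠ z) (i : ZMod N) (m : ℕ) : z ∉ arc f i m := by
  intro h
  obtain ⟨k, -, hk⟩ := mem_arc.1 h
  exact hz _ hk

variable [Fintype V]

theorem HasCycleOn.card_le (h : HasCycleOn G T) (hG : G.Connected) (hN : N + 2 ≤ Fintype.card V)
    (hP : ∀ l a b, IsPathBetween G l a b → l.length ≤ N + 1) : T.card ≤ N := by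
  by_cases hT : T = Finset.univ
  · obtain ⟨l, a, b, hl, -, rfl⟩ := h
    have hle := hP l a b hl
    rw [← hl.card_toFinset, hT, Finset.card_univ] at hle
    omega
  · obtain ⟨w, hw⟩ := not_forall.1 (mt Finset.eq_univ_iff_forall.2 hT)
    obtain ⟨l, a, b, hl, hlen⟩ := h.exists_length_eq_card_add_one hG hw
    have hle := hP l a b hl
    omega

/-- `f` is a cycle in a connected graph on at least `N + 2` vertices without paths on `N + 2`
vertices and without disjoint paths on `2 * q + 3` and `N - (2 * q + 1)` vertices. -/
structure IsTopCycle (G : SimpleGraph V) (q : ℕ) (f : ZMod N → V) : Prop where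
  isCycleMap : IsCycleMap G f
  connected : G.Connected
  add_two_le_card : N + 2 ≤ Fintype.card V
  length_le : ∀ l a b, IsPathBetween G l a b → l.length ≤ N + 1
  not_disjoint : ∀ l₁ a₁ b₁ l₂ a₂ b₂, IsPathBetween G l₁ a₁ b₁ → IsPathBetween G l₂ a₂ b₂ →
    l₁.length = 2 * q + 3 → l₂.length + (2 * q + 1) = N → ¬ l₁.Disjoint l₂

namespace IsTopCycle

theorem not_hasCycleOn (h : IsTopCycle G q f) (hT : T.card = N + 1) : ¬ HasCycleOn G T := by
  intro hc
  have hle := hc.card_le h.connected h.add_two_le_card h.length_le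
  omega

variable [NeZero N]

theorem not_adj_of_adj (h : IsTopCycle G q f) (hz : ∀ i, f i ≠ z) (hw : ∀ i, f i ≠ w)
    (hiz : G.Adj (f i) z) : ¬ G.Adj z w := by
  intro hzw
  have hp := h.isCycleMap.isPathBetween_arc (i := i) (j := i - 1) (NeZero.pos N) le_rfl (by simp)
  have hzp := hp.cons (notMem_arc hz i N) hiz.symm
  have hwzp := hzp.cons (v := w) (by simpa [hzw.ne'] using notMem_arc hw i N) hzw.symm
  simpa [length_arc] using h.length_le _ _ _ hwzp

theorem exists_adj (h : IsTopCycle G q f) (hz : ∀ i, f i ≠ z) : ∃ i, G.Adj (f i) z := by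
  by_contra! hno
  obtain ⟨a, ha, b, hb, hab⟩ := exists_adj_of_connected h.connected
    (A := Finset.univ.filter fun v => (∃ i, f i = v) ∨ ∃ i, G.Adj (f i) v) (w := z)
    ⟨f 0, by simp⟩ (by simp [hz, hno])
  simp only [Finset.mem_filter, Finset.mem_univ, true_and, not_or, not_exists] at ha hb
  by_cases hc : ∃ i, f i = a
  · obtain ⟨i, rfl⟩ := hc
    exact hb.2 i hab
  · obtain ⟨i, hi⟩ := ha.resolve_left hc
    exact h.not_adj_of_adj (not_exists.1 hc) hb.1 hi hab

theorem isIndepSet_compl (h : IsTopCycle G q f) : G.IsIndepSet ↑(Finset.univ.image f)ᶜ := by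
  intro z hz w hw _
  obtain ⟨i, hi⟩ := h.exists_adj (z := z) (by simpa using hz)
  exact h.not_adj_of_adj (by simpa using hz) (by simpa using hw) hi

theorem degSum_univ (h : IsTopCycle G q f) :
    degSum G Finset.univ = degSum G (Finset.univ.image f) +
      2 * ∑ z ∈ (Finset.univ.image f)ᶜ, degIn G (Finset.univ.image f) z := by
  rw [degSum_eq_degSum_sdiff_add (Finset.subset_univ (Finset.univ.image f)ᶜ),
    degSum_eq_zero_of_isIndepSet h.isIndepSet_compl, ← Finset.compl_eq_univ_sdiff, compl_compl,
    add_zero]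

theorem not_hasCycleOn_union_singleton (h : IsTopCycle G q f) (hz : ∀ i, f i ≠ z) :
    ¬ HasCycleOn G (Finset.univ.image f ∪ [z].toFinset) := by
  refine h.not_hasCycleOn ?_
  rw [Finset.card_union_of_disjoint (disjoint_image_toFinset (by simpa using hz)),
    h.isCycleMap.card_image]
  simp

theorem add_one_notMem_nbrIdx (h : IsTopCycle G q f) (hz : ∀ i, f i ≠ z) (hw : ∀ i, f i ≠ w)
    (hi : i ∈ nbrIdx G f z) : i + 1 ∉ nbrIdx G f w := by
  intro hi'
  rw [mem_nbrIdx] at hi hi'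
  have hp := (h.isCycleMap.isPathBetween_arc (i := i + 1) (j := i) (NeZero.pos N) le_rfl
    (by simp)).cons (notMem_arc hw (i + 1) N) hi'
  by_cases hzw : z = w
  · subst hzw
    refine h.not_hasCycleOn ?_ (hp.hasCycleOn hi.symm)
    rw [hp.card_toFinset, List.length_cons, length_arc]
  · have hle := h.length_le _ _ _
      (hp.concat (v := z) (by simpa [hzw] using notMem_arc hz (i + 1) N) hi.symm)
    simp [length_arc] at hle

theorem add_two_mul_notMem_nbrIdx (h : IsTopCycle G q f) (hq : 2 * q + 1 < N)
    (hz : ∀ i, f i ≠ z) (hw : ∀ i, f i ≠ w) (hzw : z ≠ w) (hi : i ∈ nbrIdx G f z) :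
    i + 2 * q ∉ nbrIdx G f w := by
  intro hi'
  rw [mem_nbrIdx] at hi hi'
  have hp := ((h.isCycleMap.isPathBetween_arc (i := i) (j := i + 2 * q) (m := 2 * q + 1)
    (Nat.succ_pos _) hq.le (by push_cast; ring)).cons (notMem_arc hz i _) hi).concat (v := w)
      (by simpa [hzw.symm] using notMem_arc hw i _) hi'.symm
  have hall := h.isCycleMap.isPathBetween_arc (i := i) (j := i - 1) (NeZero.pos N) le_rfl (by simp)
  have hrest := h.isCycleMap.isPathBetween_arc (i := i + ((2 * q + 1 : ℕ) : ZMod N)) (j := i - 1)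
    (m := N - (2 * q + 1)) (by omega) (Nat.sub_le _ _)
    (by push_cast [Nat.cast_sub hq.le, ZMod.natCast_self]; ring)
  have hsplit := arc_add f i (2 * q + 1) (N - (2 * q + 1))
  rw [Nat.add_sub_cancel' hq.le] at hsplit
  refine h.not_disjoint _ _ _ _ _ _ hp hrest (by simp [length_arc]) (by rw [length_arc]; omega) ?_
  intro v hv hv'
  simp only [List.cons_append, List.mem_cons, List.mem_append, List.not_mem_nil, or_false] at hv
  rcases hv with rfl | hv | rfl
  · exact notMem_arc hz _ _ hv'
  · exact (hsplit ▸ hall).disjoint_of_append hv hv'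
  · exact notMem_arc hw _ _ hv'

theorem degIn_add_le (h : IsTopCycle G q f) (hq : 2 * q + 1 < N) (hz : ∀ i, f i ≠ z)
    (hw : ∀ i, f i ≠ w) (hzw : z ≠ w) :
    degIn G (Finset.univ.image f) w + (runEnds (nbrIdx G f z)).card +
      2 * degIn G (Finset.univ.image f) z ≤ q * (runEnds (nbrIdx G f z)).card + N := by
  have hA : ∀ i ∈ nbrIdx G f z, i + 1 ∉ nbrIdx G f z := fun i => h.add_one_notMem_nbrIdx hz hz
  have hB := card_add_card_runEnds_le (q := q) hA (fun i => h.add_one_notMem_nbrIdx hz hw)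
    (fun i => h.add_one_notMem_nbrIdx hw hz)
    (fun i => h.add_two_mul_notMem_nbrIdx hq hw hz hzw.symm)
  have hgaps := card_gaps_add hA
  rw [card_nbrIdx h.isCycleMap.injective] at hB hgaps
  omega

theorem card_runEnds_nbrIdx_add_le (h : IsTopCycle G q f) (hz : ∀ i, f i ≠ z) :
    (runEnds (nbrIdx G f z)).card + 2 * degIn G (Finset.univ.image f) z ≤ N := by
  rw [← card_nbrIdx h.isCycleMap.injective]
  exact card_runEnds_add_le fun i => h.add_one_notMem_nbrIdx hz hz

theorem two_mul_degIn_lt (h : IsTopCycle G q f) (hq : 2 * q + 1 < N) (hz : ∀ i, f i ≠ z) :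
    2 * degIn G (Finset.univ.image f) z < N := by
  by_contra! hN
  obtain ⟨w, hw, hwz⟩ : ∃ w ∈ (Finset.univ.image f)ᶜ, w ≠ z := by
    refine Finset.exists_mem_ne ?_ z
    have hcard := h.add_two_le_card
    rw [Finset.card_compl, h.isCycleMap.card_image]
    omega
  replace hw : ∀ i, f i ≠ w := by simpa using hw
  obtain ⟨i, hi⟩ := h.exists_adj hw
  have hpos : 0 < degIn G (Finset.univ.image f) w :=
    Finset.card_pos.2 ⟨f i, Finset.mem_filter.2 ⟨by simp, hi.symm⟩⟩
  have hruns := h.card_runEnds_nbrIdx_add_le hz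
  have hle := h.degIn_add_le hq hz hw hwz.symm
  rw [show (runEnds (nbrIdx G f z)).card = 0 by omega] at hle
  omega

theorem degIn_add_degIn_le (h : IsTopCycle G q f) (hz : ∀ i, f i ≠ z) (hii : i ≠ i')
    (hi : i ∈ nbrIdx G f z) (hi' : i' ∈ nbrIdx G f z) :
    degIn G (Finset.univ.image f) (f (i + 1)) +
      degIn G (Finset.univ.image f) (f (i' + 1)) ≤ N := by
  by_contra! hlt
  exact h.not_hasCycleOn_union_singleton hz <| h.isCycleMap.hasCycleOn_insert hii (.singleton z)
    (by simpa using hz) (mem_nbrIdx.1 hi).symm (mem_nbrIdx.1 hi').symm (.inr hlt)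

theorem isIndepSet_image_add_one (h : IsTopCycle G q f) (hz : ∀ i, f i ≠ z) :
    G.IsIndepSet ↑((nbrIdx G f z).image fun i => f (i + 1)) := by
  simp only [Finset.coe_image]
  rintro _ ⟨i, hi, rfl⟩ _ ⟨i', hi', rfl⟩ hne hadj
  exact h.not_hasCycleOn_union_singleton hz <| h.isCycleMap.hasCycleOn_insert
    (by rintro rfl; exact hne rfl) (.singleton z) (by simpa using hz) (mem_nbrIdx.1 hi).symm
    (mem_nbrIdx.1 hi').symm (.inl hadj)

theorem isIndepSet_image_sub_one (h : IsTopCycle G q f) (hz : ∀ i, f i ≠ z) :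
    G.IsIndepSet ↑((nbrIdx G f z).image fun i => f (i - 1)) := by
  simp only [Finset.coe_image]
  rintro _ ⟨i, hi, rfl⟩ _ ⟨i', hi', rfl⟩ hne hadj
  exact h.not_hasCycleOn_union_singleton hz <| h.isCycleMap.hasCycleOn_insert_pred
    (by rintro rfl; exact hne rfl) (.singleton z) (by simpa using hz) (mem_nbrIdx.1 hi).symm
    (mem_nbrIdx.1 hi').symm (.inl hadj)

end IsTopCycle

end TopCycles

theorem image_comp_add_subset_image {V : Type*} {N : ℕ} [NeZero N] (f : ZMod N → V)
    (A : Finset (ZMod N)) (a : ZMod N) : (A.image fun i => f (i + a)) ⊆ Finset.univ.image f := by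
  intro v hv
  obtain ⟨i, -, rfl⟩ := Finset.mem_image.1 hv
  simp

section TopPairs

variable {V : Type*} [Fintype V] {G : SimpleGraph V} {N K q e : ℕ} {z : V}

section

variable [NeZero N] {f : ZMod N → V} {i : ZMod N}

namespace IsTopCycle

theorem card_image_add_one (h : IsTopCycle G q f) (z : V) :
    ((nbrIdx G f z).image fun i => f (i + 1)).card = degIn G (Finset.univ.image f) z := by
  rw [← card_nbrIdx h.isCycleMap.injective]
  exact Finset.card_image_of_injective _ (h.isCycleMap.injective.comp (add_left_injective 1))

theorem degIn_add_degIn_self_le (h : IsTopCycle G q f) (hz : ∀ i, f i ≠ z)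
    (hi : i ∈ nbrIdx G f z) :
    degIn G (Finset.univ.image f) (f (i + 1)) + degIn G (Finset.univ.image f) z ≤ N := by
  have hle := degIn_add_card_le_of_isIndepSet (image_comp_add_subset_image f _ 1)
    (h.isIndepSet_image_add_one hz) (Finset.mem_image_of_mem _ hi)
  rwa [h.card_image_add_one z, h.isCycleMap.card_image] at hle

theorem degSum_image_sdiff_add_le (h : IsTopCycle G q f) (hz : ∀ i, f i ≠ z) :
    degSum G (Finset.univ.image f \ (nbrIdx G f z).image fun i => f (i + 1)) +
        (runEnds (nbrIdx G f z)).card * ((runEnds (nbrIdx G f z)).card - 1) ≤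
      (N - degIn G (Finset.univ.image f) z) * (N - degIn G (Finset.univ.image f) z - 1) := by
  have hsub : ((runStarts (nbrIdx G f z)).image fun i => f (i - 1)) ⊆
      Finset.univ.image f \ (nbrIdx G f z).image fun i => f (i + 1) := fun v hv => by
    obtain ⟨i, hi, rfl⟩ := Finset.mem_image.1 hv
    refine Finset.mem_sdiff.2 ⟨by simp, fun hmem => ?_⟩
    obtain ⟨j, hj, hji⟩ := Finset.mem_image.1 hmem
    have hij := h.isCycleMap.injective hji
    exact (Finset.mem_filter.1 hi).2 (by rwa [show i - 2 = j by linear_combination -hij])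
  have hle := degSum_add_le_of_isIndepSet hsub <| (h.isIndepSet_image_sub_one hz).mono <|
    Finset.coe_subset.2 (Finset.image_subset_image (Finset.filter_subset _ _))
  rwa [Finset.card_sdiff_of_subset (image_comp_add_subset_image f _ 1), h.card_image_add_one z,
    h.isCycleMap.card_image, Finset.card_image_of_injective (f := fun i => f (i - 1)) _
      (h.isCycleMap.injective.comp sub_left_injective), card_runStarts] at hle

theorem degSum_image_add_le (h : IsTopCycle G q f) (hz : ∀ i, f i ≠ z) :
    degSum G (Finset.univ.image f) +
        (runEnds (nbrIdx G f z)).card * ((runEnds (nbrIdx G f z)).card - 1) ≤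
      (N - degIn G (Finset.univ.image f) z) * (N - degIn G (Finset.univ.image f) z - 1) +
        2 * ∑ i ∈ nbrIdx G f z, degIn G (Finset.univ.image f) (f (i + 1)) := by
  have hsdiff := h.degSum_image_sdiff_add_le hz
  rw [degSum_eq_of_isIndepSet (image_comp_add_subset_image f _ 1) (h.isIndepSet_image_add_one hz),
    Finset.sum_image (g := fun i => f (i + 1))
      (h.isCycleMap.injective.comp (add_left_injective 1)).injOn]
  omega

end IsTopCycle

/-- `f` is a top cycle and `z` a vertex off it, such that no other cycle of the same length and
vertex off it has more edges between them. -/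
structure IsTopPair (G : SimpleGraph V) (q : ℕ) (f : ZMod N → V) (z : V) : Prop
    extends IsTopCycle G q f where
  ne : ∀ i, f i ≠ z
  degIn_le : ∀ T w, HasCycleOn G T → T.card = N → w ∉ T →
    degIn G T w ≤ degIn G (Finset.univ.image f) z

namespace IsTopPair

/-- Otherwise exchanging `z` and `f (i + 1)` would give a better pair. -/
theorem degIn_add_one_le (h : IsTopPair G q f z) (hi : i ∈ nbrIdx G f z)
    (hi' : i + 2 ∈ nbrIdx G f z) :
    degIn G (Finset.univ.image f) (f (i + 1)) ≤ degIn G (Finset.univ.image f) z := by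
  rw [mem_nbrIdx] at hi hi'
  have hcyc := h.isCycleMap.hasCycleOn_replace (.singleton z) (by simpa using h.ne) (o := i + 1)
    (by simpa using hi.symm) (by rwa [add_assoc, one_add_one_eq_two])
  have hcard : ((Finset.univ.image f).erase (f (i + 1)) ∪ [z].toFinset).card = N := by
    have hN := h.isCycleMap.one_lt
    rw [Finset.card_union_of_disjoint (by simp [h.ne]), Finset.card_erase_of_mem (by simp),
      h.isCycleMap.card_image, List.toFinset_cons, List.toFinset_nil, insert_empty_eq,
      Finset.card_singleton]
    omega
  refine le_trans (Finset.card_le_card fun v hv => ?_)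
    (h.degIn_le _ (f (i + 1)) hcyc hcard (by simp [h.ne]))
  rw [Finset.mem_filter] at hv ⊢
  exact ⟨Finset.mem_union_left _ (Finset.mem_erase.2 ⟨hv.2.ne', hv.1⟩), hv.2⟩

theorem sum_nbrIdx_add_le (h : IsTopPair G q f z) :
    ∑ i ∈ nbrIdx G f z, degIn G (Finset.univ.image f) (f (i + 1)) +
        (runEnds (nbrIdx G f z)).card * degIn G (Finset.univ.image f) z ≤
      degIn G (Finset.univ.image f) z * degIn G (Finset.univ.image f) z +
        ∑ i ∈ runEnds (nbrIdx G f z), degIn G (Finset.univ.image f) (f (i + 1)) := by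
  have hsum := Finset.sum_filter_add_sum_filter_not (nbrIdx G f z) (fun i => i + 2 ∈ nbrIdx G f z)
    fun i => degIn G (Finset.univ.image f) (f (i + 1))
  have hcard := Finset.card_filter_add_card_filter_not (s := nbrIdx G f z)
    (fun i => i + 2 ∈ nbrIdx G f z)
  have hle : ∑ i ∈ nbrIdx G f z with i + 2 ∈ nbrIdx G f z, _ ≤ _ :=
    Finset.sum_le_card_nsmul _ (fun i => degIn G (Finset.univ.image f) (f (i + 1)))
      (degIn G (Finset.univ.image f) z) fun i hi =>
        h.degIn_add_one_le (Finset.mem_filter.1 hi).1 (Finset.mem_filter.1 hi).2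
  rw [card_nbrIdx h.isCycleMap.injective] at hcard
  rw [smul_eq_mul] at hle
  have hmul := congrArg (· * degIn G (Finset.univ.image f) z) hcard
  simp only [add_mul] at hmul
  unfold runEnds
  omega

theorem sum_compl_le (h : IsTopPair G q f z) :
    ∑ w ∈ (Finset.univ.image f)ᶜ, degIn G (Finset.univ.image f) w ≤
      (Fintype.card V - N) * degIn G (Finset.univ.image f) z := by
  have hle := Finset.sum_le_card_nsmul _ _ _ fun w hw =>
    h.degIn_le _ w h.isCycleMap.hasCycleOn h.isCycleMap.card_image (Finset.mem_compl.1 hw)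
  rwa [Finset.card_compl, h.isCycleMap.card_image] at hle

end IsTopPair

end

variable [NeZero (2 * K)] {f : ZMod (2 * K) → V}

theorem IsTopCycle.sum_runEnds_le (h : IsTopCycle G q f) (hz : ∀ i, f i ≠ z)
    (he : degIn G (Finset.univ.image f) z + e = K) (he₂ : e ≤ 2) :
    2 * ∑ i ∈ runEnds (nbrIdx G f z), degIn G (Finset.univ.image f) (f (i + 1)) ≤
      2 * ((runEnds (nbrIdx G f z)).card * degIn G (Finset.univ.image f) z) +
        (runEnds (nbrIdx G f z)).card * ((runEnds (nbrIdx G f z)).card - 1) + 4 * e := by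
  have hruns := h.card_runEnds_nbrIdx_add_le hz
  have hsub : runEnds (nbrIdx G f z) ⊆ nbrIdx G f z := Finset.filter_subset _ _
  rcases lt_trichotomy (runEnds (nbrIdx G f z)).card 1 with hμ | hμ | hμ
  · simp [Finset.card_eq_zero.1 (Nat.lt_one_iff.1 hμ)]
  · obtain ⟨i, hi⟩ := Finset.card_eq_one.1 hμ
    have hle := h.degIn_add_degIn_self_le hz (i := i) (hsub (by simp [hi]))
    rw [hi, Finset.sum_singleton, Finset.card_singleton]
    omega
  · have hle := sum_le_card_mul_of_pairwise_add_le hμ fun i hi j hj hij =>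
      h.degIn_add_degIn_le hz hij (hsub hi) (hsub hj)
    have hmul : (runEnds (nbrIdx G f z)).card * degIn G (Finset.univ.image f) z +
        (runEnds (nbrIdx G f z)).card * e = (runEnds (nbrIdx G f z)).card * K := by
      rw [← mul_add, he]
    have hμe : (runEnds (nbrIdx G f z)).card ≤ 2 * e := by omega
    generalize (runEnds (nbrIdx G f z)).card = μ at *
    have hμ₄ : μ ≤ 4 := by omega
    interval_cases μ <;> omega

namespace IsTopPair

theorem degSum_image_le (h : IsTopPair G q f z)
    (he : degIn G (Finset.univ.image f) z + e = K) (he₂ : e ≤ 2) :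
    degSum G (Finset.univ.image f) ≤ (K + e) * (K + e - 1) +
      2 * (degIn G (Finset.univ.image f) z * degIn G (Finset.univ.image f) z) + 4 * e := by
  have himage := h.degSum_image_add_le h.ne
  have hruns := h.sum_runEnds_le h.ne he he₂
  have hsum := h.sum_nbrIdx_add_le
  rw [show 2 * K - degIn G (Finset.univ.image f) z = K + e by omega] at himage
  omega

theorem degSum_image_le_of_runEnds_eq_empty (h : IsTopPair G q f z)
    (he : degIn G (Finset.univ.image f) z + e = K) (hruns : runEnds (nbrIdx G f z) = ∅) :
    degSum G (Finset.univ.image f) ≤ (K + e) * (K + e - 1) +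
      2 * (degIn G (Finset.univ.image f) z * degIn G (Finset.univ.image f) z) := by
  have himage := h.degSum_image_add_le h.ne
  have hsum := h.sum_nbrIdx_add_le
  rw [show 2 * K - degIn G (Finset.univ.image f) z = K + e by omega] at himage
  rw [hruns, Finset.card_empty, Finset.sum_empty] at hsum
  omega

theorem degSum_image_le_of_two_le (h : IsTopPair G q f z)
    (he : degIn G (Finset.univ.image f) z + e = K) (hd : 2 ≤ degIn G (Finset.univ.image f) z) :
    degSum G (Finset.univ.image f) ≤ (K + e) * (K + e - 1) +
      2 * (degIn G (Finset.univ.image f) z * K) := by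
  have himage := h.degSum_image_add_le h.ne
  rw [← card_nbrIdx h.isCycleMap.injective] at hd
  have hsum := sum_le_card_mul_of_pairwise_add_le hd fun i hi j hj hij =>
    h.degIn_add_degIn_le h.ne hij hi hj
  rw [card_nbrIdx h.isCycleMap.injective] at hsum
  rw [show 2 * K - degIn G (Finset.univ.image f) z = K + e by omega] at himage
  omega

theorem sum_compl_le_of_runEnds_nonempty (h : IsTopPair G q f z) (hqK : 2 * q + 2 ≤ K)
    (hq : 1 ≤ q) (hd : degIn G (Finset.univ.image f) z + 1 = K)
    (hruns : (runEnds (nbrIdx G f z)).Nonempty) :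
    ∑ w ∈ (Finset.univ.image f)ᶜ, degIn G (Finset.univ.image f) w ≤
      degIn G (Finset.univ.image f) z +
        (Fintype.card V - 2 * K - 1) * (degIn G (Finset.univ.image f) z - 1) := by
  have hz : z ∈ (Finset.univ.image f)ᶜ := by simpa using h.ne
  have hcard : ((Finset.univ.image f)ᶜ.erase z).card = Fintype.card V - 2 * K - 1 := by
    rw [Finset.card_erase_of_mem hz, Finset.card_compl, h.isCycleMap.card_image]
  rw [← Finset.add_sum_erase _ _ hz, ← hcard]
  refine Nat.add_le_add_left (Finset.sum_le_card_nsmul _ _ _ fun w hw => ?_) _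
  rw [Finset.mem_erase, Finset.mem_compl] at hw
  have hle := h.degIn_add_le (w := w) (by omega) h.ne (by simpa using hw.2) hw.1.symm
  have hcardRuns := h.card_runEnds_nbrIdx_add_le h.ne
  have hpos := hruns.card_pos
  generalize (runEnds (nbrIdx G f z)).card = μ at *
  have hμ : μ = 1 ∨ μ = 2 := by omega
  rcases hμ with rfl | rfl <;> omega

end IsTopPair

theorem le_or_le_of_add_eq {K d e c n s : ℕ} (hK : d + e = K) (hd : 2 ≤ d) (he : 3 ≤ e)
    (hn : 2 * K ≤ n) (hc : c ≤ (K + e) * (K + e - 1) + 2 * (d * K)) (hs : s ≤ (n - 2 * K) * d) :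
    c + 2 * s ≤ 2 * K * (2 * K - 1) + 2 * (n - 2 * K) ∨
      c + 2 * s ≤ K * (K + 1) + 2 * (K - 1) * (n - K - 1) := by
  obtain ⟨x, rfl⟩ := Nat.exists_eq_add_of_le hn
  obtain ⟨d, rfl⟩ := Nat.exists_eq_add_of_le' hd
  obtain ⟨e, rfl⟩ := Nat.exists_eq_add_of_le' he
  obtain rfl : K = d + e + 5 := by omega
  rw [show d + e + 5 + (e + 3) - 1 = d + 2 * e + 7 by omega] at hc
  rw [Nat.add_sub_cancel_left] at hs ⊢
  rw [show 2 * (d + e + 5) - 1 = 2 * d + 2 * e + 9 by omega,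
    show d + e + 5 - 1 = d + e + 4 by omega,
    show 2 * (d + e + 5) + x - (d + e + 5) - 1 = d + e + 4 + x by omega]
  rcases Nat.lt_or_ge (d + 2 * e + 7) (2 * x) with hx | hx
  · right
    have hex := Nat.mul_le_mul_left (e + 2) hx
    nlinarith
  · left
    have hdx := Nat.mul_le_mul_left (d + 1) hx
    nlinarith

theorem le_or_le_of_add_two_eq {K d c n s : ℕ} (hK : d + 2 = K) (hd : 2 ≤ d)
    (hn : 2 * K + 2 ≤ n) (hc : c ≤ (K + 2) * (K + 2 - 1) + 2 * (d * d) + 4 * 2)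
    (hs : s ≤ (n - 2 * K) * d) :
    c + 2 * s ≤ 2 * K * (2 * K - 1) + 2 * (n - 2 * K) ∨
      c + 2 * s ≤ K * (K + 1) + 2 * (K - 1) * (n - K - 1) := by
  subst hK
  obtain ⟨x, rfl⟩ := Nat.exists_eq_add_of_le hn
  rw [show d + 2 + 2 - 1 = d + 3 by omega] at hc
  rw [show 2 * (d + 2) + 2 + x - 2 * (d + 2) = 2 + x by omega] at hs ⊢
  rw [show 2 * (d + 2) - 1 = 2 * d + 3 by omega, show d + 2 - 1 = d + 1 by omega,
    show 2 * (d + 2) + 2 + x - (d + 2) - 1 = d + 3 + x by omega]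
  rcases Nat.lt_or_ge (d + x) 4 with hx | hx
  · left
    have hd₄ : d < 4 := by omega
    have hx₂ : x < 2 := by omega
    interval_cases x <;> interval_cases d <;> omega
  · right
    nlinarith

theorem le_of_add_one_eq {K d c n s : ℕ} (hK : d + 1 = K) (hn : 2 * K ≤ n)
    (hc : c ≤ (K + 1) * (K + 1 - 1) + 2 * (d * d)) (hs : s ≤ (n - 2 * K) * d) :
    c + 2 * s ≤ K * (K + 1) + 2 * (K - 1) * (n - K - 1) := by
  subst hK
  obtain ⟨x, rfl⟩ := Nat.exists_eq_add_of_le hn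
  rw [Nat.add_sub_cancel] at hc ⊢
  rw [Nat.add_sub_cancel_left] at hs
  rw [show 2 * (d + 1) + x - (d + 1) - 1 = d + x by omega]
  nlinarith

theorem le_or_le_of_add_one_eq {K d c n s : ℕ} (hK : d + 1 = K) (hd : 3 ≤ d)
    (hn : 2 * K + 2 ≤ n) (hc : c ≤ (K + 1) * (K + 1 - 1) + 2 * (d * d) + 4 * 1)
    (hs : s ≤ d + (n - 2 * K - 1) * (d - 1)) :
    c + 2 * s ≤ 2 * K * (2 * K - 1) + 2 * (n - 2 * K) ∨
      c + 2 * s ≤ K * (K + 1) + 2 * (K - 1) * (n - K - 1) := by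
  obtain ⟨x, rfl⟩ := Nat.exists_eq_add_of_le hn
  obtain ⟨d, rfl⟩ := Nat.exists_eq_add_of_le' hd
  subst hK
  rw [Nat.add_sub_cancel] at hc ⊢
  rw [show 2 * (d + 3 + 1) + 2 + x - 2 * (d + 3 + 1) - 1 = 1 + x by omega,
    show d + 3 - 1 = d + 2 by omega] at hs
  rw [show 2 * (d + 3 + 1) - 1 = 2 * d + 7 by omega,
    show 2 * (d + 3 + 1) + 2 + x - 2 * (d + 3 + 1) = 2 + x by omega,
    show 2 * (d + 3 + 1) + 2 + x - (d + 3 + 1) - 1 = d + 5 + x by omega]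
  rcases x.eq_zero_or_pos with rfl | hx
  · left
    nlinarith
  · right
    nlinarith

theorem IsTopPair.degSum_univ_le (h : IsTopPair G q f z) (hqK : 2 * q + 2 ≤ K) (hq : 1 ≤ q) :
    degSum G Finset.univ ≤ 2 * K * (2 * K - 1) + 2 * (Fintype.card V - 2 * K) ∨
      degSum G Finset.univ ≤ K * (K + 1) + 2 * (K - 1) * (Fintype.card V - K - 1) := by
  have hn := h.add_two_le_card
  have hdK := h.two_mul_degIn_lt (by omega) h.ne
  have hs := h.sum_compl_le
  obtain ⟨e, he⟩ := Nat.exists_eq_add_of_le (show degIn G (Finset.univ.image f) z ≤ K by omega)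
  rw [h.degSum_univ]
  rcases lt_or_ge (degIn G (Finset.univ.image f) z) 2 with hd | hd
  · left
    have hc := degSum_le_card_mul (G := G) (Finset.univ.image f)
    have hx := Nat.mul_le_mul_left (Fintype.card V - 2 * K) (Nat.le_of_lt_succ hd)
    rw [h.isCycleMap.card_image] at hc
    omega
  obtain rfl | rfl | he₃ : e = 1 ∨ e = 2 ∨ 3 ≤ e := by omega
  · rcases (runEnds (nbrIdx G f z)).eq_empty_or_nonempty with hruns | hruns
    · exact .inr <| le_of_add_one_eq he.symm (by omega)
        (h.degSum_image_le_of_runEnds_eq_empty he.symm hruns) hs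
    · exact le_or_le_of_add_one_eq he.symm (by omega) hn (h.degSum_image_le he.symm (by omega))
        (h.sum_compl_le_of_runEnds_nonempty hqK hq he.symm hruns)
  · exact le_or_le_of_add_two_eq he.symm hd hn (h.degSum_image_le he.symm le_rfl) hs
  · exact le_or_le_of_add_eq he.symm hd he₃ (by omega)
      (h.degSum_image_le_of_two_le he.symm hd) hs

end TopPairs

section Final

variable {V : Type*} [Fintype V] {G : SimpleGraph V} {K n q : ℕ} {T : Finset V}

theorem HasCycleOn.exists_isTopPair [NeZero (2 * K)] (hT : HasCycleOn G T) (hTK : T.card = 2 * K)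
    (hG : G.Connected) (hn : 2 * K + 2 ≤ Fintype.card V)
    (hP : ∀ l a b, IsPathBetween G l a b → l.length ≤ 2 * K + 1)
    (hF : ∀ l₁ a₁ b₁ l₂ a₂ b₂, IsPathBetween G l₁ a₁ b₁ → IsPathBetween G l₂ a₂ b₂ →
      l₁.length = 2 * q + 3 → l₂.length + (2 * q + 1) = 2 * K → ¬ l₁.Disjoint l₂) :
    ∃ (f : ZMod (2 * K) → V) (z : V), IsTopPair G q f z := by
  obtain ⟨w, hw⟩ : ∃ w, w ∉ T := by
    by_contra! hall
    rw [Finset.eq_univ_iff_forall.2 hall, Finset.card_univ] at hTK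
    omega
  obtain ⟨⟨D, z⟩, hD, hmax⟩ := Finset.exists_max_image
    ((Finset.univ : Finset (Finset V × V)).filter fun p =>
      HasCycleOn G p.1 ∧ p.1.card = 2 * K ∧ p.2 ∉ p.1) (fun p => degIn G p.1 p.2)
    ⟨(T, w), by simpa using ⟨hT, hTK, hw⟩⟩
  simp only [Finset.mem_filter, Finset.mem_univ, true_and, Prod.forall] at hD hmax
  obtain ⟨f, hf, rfl⟩ := hD.1.exists_isCycleMap hD.2.1
  exact ⟨f, z, ⟨hf, hG, hn, hP, hF⟩, by simpa using hD.2.2,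
    fun T w hT hTK hw => hmax T w ⟨hT, hTK, hw⟩⟩

theorem degSum_univ_le_of_no_long_path (hq : 1 ≤ q) (hqK : 2 * q + 2 ≤ K) (hG : G.Connected)
    (hn : 2 * K + 2 ≤ Fintype.card V)
    (hP : ∀ l a b, IsPathBetween G l a b → l.length ≤ 2 * K + 1)
    (hF : ∀ l₁ a₁ b₁ l₂ a₂ b₂, IsPathBetween G l₁ a₁ b₁ → IsPathBetween G l₂ a₂ b₂ →
      l₁.length = 2 * q + 3 → l₂.length + (2 * q + 1) = 2 * K → ¬ l₁.Disjoint l₂) :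
    degSum G Finset.univ ≤ 2 * K * (2 * K - 1) + 2 * (Fintype.card V - 2 * K) ∨
      degSum G Finset.univ ≤ K * (K + 1) + 2 * (K - 1) * (Fintype.card V - K - 1) := by
  by_cases hT : ∃ T, HasCycleOn G T ∧ T.card = 2 * K
  · obtain ⟨T, hT, hTK⟩ := hT
    have : NeZero (2 * K) := ⟨by omega⟩
    obtain ⟨f, z, h⟩ := hT.exists_isTopPair hTK hG hn hP hF
    exact h.degSum_univ_le hqK hq
  · refine degSum_univ_le_of_no_long_cycle (by omega) (by omega) hG hP fun T hTc => ?_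
    exact (hTc.card_le hG hn hP).lt_of_ne fun hTK => hT ⟨T, hTc, hTK⟩

theorem two_mul_hFun_one (hn : K + 1 ≤ n) : 2 * hFun n (K + 1) 1 = K * (K - 1) + 2 * (n - K) := by
  have hdiv := Nat.div_mul_cancel (Nat.even_mul_pred_self K).two_dvd
  rw [hFun, Nat.add_sub_cancel, Nat.choose_two_right]
  omega

theorem two_mul_hFun_sub_one (hK : 1 ≤ K) (hn : 2 * K ≤ n) :
    2 * hFun n (2 * K) (K - 1) = K * (K + 1) + 2 * (K - 1) * (n - K - 1) := by
  have hdiv := Nat.div_mul_cancel (Nat.even_mul_succ_self K).two_dvd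
  rw [hFun, show 2 * K - (K - 1) = K + 1 by omega,
    show n - 2 * K + (K - 1) = n - K - 1 by omega, Nat.choose_two_right, Nat.add_sub_cancel,
    mul_comm (K + 1) K, mul_assoc 2]
  omega

end Final

theorem connected_two_odd_paths_bound_general {V : Type*} [Fintype V] {k₁ k₂ : ℕ} (hk₂ : 2 ≤ k₂)
    (hk : k₂ ≤ k₁) (hn : 2 * k₁ + 2 * k₂ + 2 ≤ Fintype.card V) {G : SimpleGraph V}
    (hG : G.Connected)
    (hfree : ¬ ContainsCopy G (pathGraph (2 * k₁ + 1) ⊕g pathGraph (2 * k₂ + 1))) :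
    edgeCount G ≤ max (hFun (Fintype.card V) (2 * k₁ + 2 * k₂ + 1) 1)
      (hFun (Fintype.card V) (2 * k₁ + 2 * k₂) (k₁ + k₂ - 1)) := by
  have hP : ∀ l a b, IsPathBetween G l a b → l.length ≤ 2 * (k₁ + k₂) + 1 := fun l a b h => by
    by_contra! hlt
    exact hfree (containsCopy_of_le_length h.isChain h.nodup (by omega))
  have hF : ∀ l₁ a₁ b₁ l₂ a₂ b₂, IsPathBetween G l₁ a₁ b₁ → IsPathBetween G l₂ a₂ b₂ →
      l₁.length = 2 * (k₂ - 1) + 3 → l₂.length + (2 * (k₂ - 1) + 1) = 2 * (k₁ + k₂) →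
      ¬ l₁.Disjoint l₂ := fun l₁ _ _ l₂ _ _ h₁ h₂ hl₁ hl₂ hd => by
    have hc := containsCopy_of_nodup_append h₂.isChain h₁.isChain (h₂.nodup.append h₁.nodup hd.symm)
    rw [show l₁.length = 2 * k₂ + 1 by omega, show l₂.length = 2 * k₁ + 1 by omega] at hc
    exact hfree hc
  have hdegSum := degSum_univ_le_of_no_long_path (by omega) (by omega) hG (by omega) hP hF
  rw [← two_mul_edgeCount, ← two_mul_hFun_one (by omega),
    ← two_mul_hFun_sub_one (by omega) (by omega)] at hdegSum
  rw [← mul_add, le_max_iff]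
  omega

end

/-- If `k1 ≥ k2 ≥ 2` and `G` is a connected graph on
`n ≥ 2k1 + 2k2 + 2` vertices containing no copy of `P_{2k1+1} ∪ P_{2k2+1}`, then
`e(G) ≤ max{h(n, 2k1+2k2+1, 1), h(n, 2k1+2k2, k1+k2-1)}`. -/
theorem connected_two_odd_paths_bound (k1 k2 n : ℕ) (hk2 : 2 ≤ k2) (hk12 : k2 ≤ k1)
    (hn : 2 * k1 + 2 * k2 + 2 ≤ n) (G : SimpleGraph (Fin n)) (hG : G.Connected)
    (hfree : ¬ ContainsCopy G ((pathGraph (2 * k1 + 1)) ⊕g (pathGraph (2 * k2 + 1)))) :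
    edgeCount G ≤
      max (hFun n (2 * k1 + 2 * k2 + 1) 1) (hFun n (2 * k1 + 2 * k2) (k1 + k2 - 1)) := by
  simpa using connected_two_odd_paths_bound_general hk2 hk12 (by simpa using hn) hG hfree
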